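/- arXiv:math/0311193 — 2 statements merged into one kernel-verified Lean document; each statement's English description precedes it below -/
import Mathlib

section
/- The skew product T admits a unique absolutely continuous (with respect to Leb) invariant Borel probability measure m. Moreover m is ergodic, and its density h = dm/dLeb has a version which is Lipschitz continuous on every compact subset of S¹ × (0,1]. -/
open MeasureTheory Real Filter Topology
open scoped NNReal ENNReal

noncomputable section

/-- The circle `S¹ = ℝ/ℤ`. -/
abbrev S1 : Type := UnitAddCircle

/-- The map `F(ω) = 4ω` on the circle. -/
noncomputable def Fm : S1 → S1 := fun ω => (4 : ℕ) • ω

/-- The one-dimensional maps `T_a(x) = x(1 + 2^a x^a) = x(1 + (2x)^a)` for `x ≤ 1/2`,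
`2x - 1` for `x > 1/2`. -/
noncomputable def Ta (a x : ℝ) : ℝ := if x ≤ 1 / 2 then x * (1 + (2 * x) ^ a) else 2 * x - 1

/-- The skew product `T(ω, x) = (F ω, T_{α(ω)}(x))`. -/
noncomputable def Tskew (α : S1 → ℝ) : S1 × ℝ → S1 × ℝ :=
  fun p => (Fm p.1, Ta (α p.1) p.2)

/-- The reference measure: Haar probability on `S¹` times Lebesgue measure on `[0,1]`. -/
noncomputable def Leb : Measure (S1 × ℝ) :=
  (volume : Measure S1).prod (volume.restrict (Set.Icc (0:ℝ) 1))

/-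
The transfer operator of `T` preserves a cone of densities: in the fibres the cone of Liverani,
Saussol and Vaienti (`g` antitone, `x ^ (A + 1) * g x` monotone), along the circle a cone of
log-Lipschitz functions. Bounded subsets of the cone are equicontinuous on compact subsets of
`S¹ × (0,1]` and dominated by a multiple of `x ^ (-A)` with `A < 1`, so by Arzelà–Ascoli the
Cesàro averages of the iterates of any bounded member accumulate at a fixed density which gives
every invariant set the same mass. Backward orbits are dense, so a nonnegative fixed function
vanishing at one point vanishes identically. The infimum of two fixed densities `f` and `t • g` is
again fixed, so if they agree at one point they are equal: fixed densities are proportional. Hence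
the mass of an invariant set `E` depends on a starting density only through its total mass. Every
nonnegative Lipschitz function is a difference of two bounded members of the cone, so `Leb`
restricted to `E` is a multiple of `Leb`, and `E` or its complement is null. This gives
ergodicity, and ergodicity together with positivity of the fixed density gives uniqueness.
-/

section Development

open Set

/-- The left branch `y ↦ y (1 + (2 y)^a)` of `T_a`, extended beyond `[0, 1/2]`. -/
def leftBranch (a y : ℝ) : ℝ := y * (1 + (2 * y) ^ a)

/-- The derivative `1 + (1 + a) (2 y)^a` of `leftBranch a` at `y`. -/
def leftBranchDeriv (a y : ℝ) : ℝ := 1 + (1 + a) * (2 * y) ^ a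

/-- The inverse `(0, 1] → (0, 1/2]` of the left branch of `T_a` (arbitrary outside `(0, 1]`). -/
def leftInverse (a : ℝ) : ℝ → ℝ := Function.invFunOn (leftBranch a) (Ioc 0 (1 / 2))

section Branches

variable {a A x y z : ℝ}

lemma leftBranch_zero : leftBranch a 0 = 0 := zero_mul _

lemma leftBranch_half : leftBranch a (1 / 2) = 1 := by norm_num [leftBranch]

lemma strictMonoOn_leftBranch (ha : 0 ≤ a) : StrictMonoOn (leftBranch a) (Ici 0) := by
  intro y hy z hz hyz
  rw [mem_Ici] at hy
  have hpow : (2 * y) ^ a ≤ (2 * z) ^ a := by gcongr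
  have hpos : 0 ≤ (2 * y) ^ a := by positivity
  exact mul_lt_mul hyz (by linarith) (by linarith) (hy.trans hyz.le)

lemma le_leftBranch (hy : 0 ≤ y) : y ≤ leftBranch a y := by
  have : 0 ≤ (2 * y) ^ a := by positivity
  exact le_mul_of_one_le_right hy (by linarith)

lemma leftBranch_le_two_mul (ha : 0 ≤ a) (hy : y ∈ Icc 0 (1 / 2)) : leftBranch a y ≤ 2 * y := by
  have : (2 * y) ^ a ≤ 1 := rpow_le_one (by linarith [hy.1]) (by linarith [hy.2]) ha
  unfold leftBranch
  nlinarith [hy.1]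

lemma continuous_leftBranch (ha : 0 ≤ a) : Continuous (leftBranch a) :=
  continuous_id.mul (continuous_const.add
    ((continuous_const.mul continuous_id).rpow_const fun _ => Or.inr ha))

lemma bijOn_leftBranch (ha : 0 ≤ a) : BijOn (leftBranch a) (Ioc 0 (1 / 2)) (Ioc 0 1) := by
  have hmono := strictMonoOn_leftBranch ha
  refine ⟨fun y hy => ⟨?_, ?_⟩, (hmono.mono fun y hy => hy.1.le).injOn, ?_⟩
  · simpa only [leftBranch_zero] using hmono self_mem_Ici hy.1.le hy.1
  · simpa only [leftBranch_half] using hmono.monotoneOn hy.1.le (mem_Ici.2 one_half_pos.le) hy.2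
  · simpa only [SurjOn, leftBranch_zero, leftBranch_half] using
      intermediate_value_Ioc one_half_pos.le (continuous_leftBranch ha).continuousOn

lemma leftInverse_mem (ha : 0 ≤ a) (hx : x ∈ Ioc (0 : ℝ) 1) : leftInverse a x ∈ Ioc 0 (1 / 2) :=
  (bijOn_leftBranch ha).surjOn.mapsTo_invFunOn hx

lemma leftBranch_leftInverse (ha : 0 ≤ a) (hx : x ∈ Ioc (0 : ℝ) 1) :
    leftBranch a (leftInverse a x) = x :=
  (bijOn_leftBranch ha).surjOn.rightInvOn_invFunOn hx

lemma leftInverse_leftBranch (ha : 0 ≤ a) (hy : y ∈ Ioc 0 (1 / 2)) :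
    leftInverse a (leftBranch a y) = y :=
  (bijOn_leftBranch ha).injOn.leftInvOn_invFunOn hy

lemma leftInverse_mem_unit (ha : 0 ≤ a) (hx : x ∈ Ioc (0 : ℝ) 1) :
    leftInverse a x ∈ Ioc (0 : ℝ) 1 :=
  Ioc_subset_Ioc_right (by norm_num) (leftInverse_mem ha hx)

lemma rightInverse_mem (hx : x ∈ Ioc (0 : ℝ) 1) : (x + 1) / 2 ∈ Ioc (1 / 2 : ℝ) 1 :=
  ⟨by linarith [hx.1], by linarith [hx.2]⟩

lemma rightInverse_mem_unit (hx : x ∈ Ioc (0 : ℝ) 1) : (x + 1) / 2 ∈ Ioc (0 : ℝ) 1 :=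
  Ioc_subset_Ioc_left (by norm_num) (rightInverse_mem hx)

lemma monotoneOn_leftInverse (ha : 0 ≤ a) : MonotoneOn (leftInverse a) (Ioc 0 1) := by
  intro x hx z hz hxz
  rw [← (strictMonoOn_leftBranch ha).le_iff_le (leftInverse_mem ha hx).1.le
    (leftInverse_mem ha hz).1.le]
  rwa [leftBranch_leftInverse ha hx, leftBranch_leftInverse ha hz]

lemma Ta_of_le_half (hy : y ≤ 1 / 2) : Ta a y = leftBranch a y := if_pos hy

lemma Ta_of_half_lt (hy : 1 / 2 < y) : Ta a y = 2 * y - 1 := if_neg hy.not_ge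

lemma Ta_leftInverse (ha : 0 ≤ a) (hx : x ∈ Ioc (0 : ℝ) 1) : Ta a (leftInverse a x) = x := by
  rw [Ta_of_le_half (leftInverse_mem ha hx).2, leftBranch_leftInverse ha hx]

lemma Ta_rightInverse (hx : x ∈ Ioc (0 : ℝ) 1) : Ta a ((x + 1) / 2) = x := by
  rw [Ta_of_half_lt (rightInverse_mem hx).1]
  ring

lemma mapsTo_Ta (ha : 0 ≤ a) : MapsTo (Ta a) (Ioc 0 1) (Ioc 0 1) := by
  intro y hy
  rcases le_or_gt y (1 / 2) with hle | hgt
  · rw [Ta_of_le_half hle]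
    exact (bijOn_leftBranch ha).mapsTo ⟨hy.1, hle⟩
  · rw [Ta_of_half_lt hgt]
    exact ⟨by linarith, by linarith [hy.2]⟩

lemma one_le_leftBranchDeriv (ha : 0 ≤ a) (hy : 0 ≤ y) : 1 ≤ leftBranchDeriv a y :=
  le_add_of_nonneg_right (by positivity)

lemma leftBranchDeriv_pos (ha : 0 ≤ a) (hy : 0 ≤ y) : 0 < leftBranchDeriv a y :=
  one_pos.trans_le (one_le_leftBranchDeriv ha hy)

lemma monotoneOn_leftBranchDeriv (ha : 0 ≤ a) : MonotoneOn (leftBranchDeriv a) (Ici 0) := by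
  intro y hy z _ hyz
  rw [mem_Ici] at hy
  unfold leftBranchDeriv
  gcongr

lemma hasDerivAt_leftBranch (hy : 0 < y) : HasDerivAt (leftBranch a) (leftBranchDeriv a y) y := by
  have hpow : HasDerivAt (fun y : ℝ => (2 * y) ^ a) (2 * 1 * a * (2 * y) ^ (a - 1)) y :=
    ((hasDerivAt_id y).const_mul 2).rpow_const (Or.inl (by positivity))
  refine ((hasDerivAt_id y).mul (hpow.const_add 1)).congr_deriv ?_
  have hsplit : (2 * y) ^ a = (2 * y) ^ (a - 1) * (2 * y) := by
    rw [← rpow_add_one (by positivity), sub_add_cancel]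
  rw [leftBranchDeriv, hsplit, id]
  ring

lemma leftBranch_sub_le (ha : 0 < a) (haA : a ≤ A) (hz : 0 < z) (hzy : z ≤ y) (hy : y ≤ 1 / 2) :
    leftBranch A (y - z) ≤ leftBranch a y - leftBranch a z := by
  have hyz : 0 ≤ y - z := sub_nonneg.2 hzy
  have hdiff : (2 * (y - z)) ^ A ≤ (2 * y) ^ a :=
    calc (2 * (y - z)) ^ A ≤ (2 * (y - z)) ^ a :=
          rpow_le_rpow_of_exponent_ge_of_imp (by linarith) (by linarith) haA
            fun _ h => absurd h (ha.trans_le haA).ne'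
      _ ≤ (2 * y) ^ a := by gcongr; linarith
  have hpow : (2 * z) ^ a ≤ (2 * y) ^ a := by gcongr
  unfold leftBranch
  nlinarith [mul_le_mul_of_nonneg_left hdiff hyz, mul_le_mul_of_nonneg_left hpow hz.le]

lemma abs_sub_lt_of_abs_leftBranch_sub_lt {s : ℝ} (ha : 0 < a) (haA : a ≤ A) (hs : 0 < s)
    (hy : y ∈ Ioc 0 (1 / 2)) (hz : z ∈ Ioc 0 (1 / 2))
    (h : |leftBranch a y - leftBranch a z| < leftBranch A s) : |y - z| < s := by
  rw [← (strictMonoOn_leftBranch (ha.le.trans haA)).lt_iff_lt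
    (mem_Ici.2 (abs_nonneg _)) hs.le]
  refine lt_of_le_of_lt ?_ h
  rcases le_total z y with hzy | hyz
  · rw [abs_of_nonneg (sub_nonneg.2 hzy)]
    exact (leftBranch_sub_le ha haA hz.1 hzy hy.2).trans (le_abs_self _)
  · rw [abs_sub_comm, abs_of_nonneg (sub_nonneg.2 hyz), abs_sub_comm (leftBranch a y)]
    exact (leftBranch_sub_le ha haA hy.1 hyz hz.2).trans (le_abs_self _)

lemma exists_Ta_eq_abs_sub_lt {s : ℝ} (ha : 0 < a) (haA : a ≤ A) (hs : 0 < s)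
    (hx : x ∈ Ioc (0 : ℝ) 1) (hz : z ∈ Ioc (0 : ℝ) 1) (h : |x - Ta a z| < leftBranch A s) :
    ∃ y ∈ Ioc (0 : ℝ) 1, Ta a y = x ∧ |y - z| < s := by
  rcases le_or_gt z (1 / 2) with hle | hgt
  · refine ⟨leftInverse a x, leftInverse_mem_unit ha.le hx, Ta_leftInverse ha.le hx,
      abs_sub_lt_of_abs_leftBranch_sub_lt ha haA hs (leftInverse_mem ha.le hx) ⟨hz.1, hle⟩ ?_⟩
    rwa [leftBranch_leftInverse ha.le hx, ← Ta_of_le_half hle]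
  · refine ⟨(x + 1) / 2, rightInverse_mem_unit hx, Ta_rightInverse hx, ?_⟩
    rw [Ta_of_half_lt hgt] at h
    rcases le_or_gt s (1 / 2) with hs' | hs'
    · have := leftBranch_le_two_mul (ha.le.trans haA) ⟨hs.le, hs'⟩
      rw [abs_lt] at h ⊢
      constructor <;> linarith [h.1, h.2]
    · rw [abs_lt]
      constructor <;> linarith [hx.1, hx.2, hz.2]

end Branches

section ParameterDependence

variable {a b x u : ℝ}

lemma rpow_sub_rpow_le (ha : 0 < a) (hab : a ≤ b) (hu : 0 ≤ u) :
    u ^ a - u ^ b ≤ (b - a) / a := by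
  have hratio : 1 ≤ b / a := (one_le_div ha).2 hab
  have hpow0 : 0 ≤ u ^ a := rpow_nonneg hu a
  have hbernoulli : 1 + b / a * (u ^ a - 1) ≤ u ^ b := by
    have h := one_add_mul_self_le_rpow_one_add (s := u ^ a - 1) (by linarith) hratio
    rwa [add_sub_cancel, ← rpow_mul hu, mul_div_cancel₀ b ha.ne'] at h
  rw [sub_div, div_self ha.ne']
  nlinarith [mul_nonneg hpow0 (sub_nonneg.2 hratio)]

lemma leftInverse_le_leftInverse (ha : 0 < a) (hab : a ≤ b) (hx : x ∈ Ioc (0 : ℝ) 1) :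
    leftInverse a x ≤ leftInverse b x := by
  have hb := ha.le.trans hab
  obtain ⟨hy0, hy1⟩ := leftInverse_mem ha.le hx
  rw [← (strictMonoOn_leftBranch hb).le_iff_le hy0.le (leftInverse_mem hb hx).1.le,
    leftBranch_leftInverse hb hx]
  conv_rhs => rw [← leftBranch_leftInverse ha.le hx]
  unfold leftBranch
  gcongr ?_ * (1 + ?_)
  exact rpow_le_rpow_of_exponent_ge (by linarith) (by linarith) hab

lemma rpow_leftInverse_le (ha : 0 < a) (hab : a ≤ b) (hx : x ∈ Ioc (0 : ℝ) 1) :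
    (2 * leftInverse b x) ^ b ≤ (2 * leftInverse a x) ^ a := by
  have hb := ha.le.trans hab
  have hy := (leftInverse_mem ha.le hx).1
  have hle := leftInverse_le_leftInverse ha hab hx
  have heq : leftBranch b (leftInverse b x) = leftBranch a (leftInverse a x) := by
    rw [leftBranch_leftInverse hb hx, leftBranch_leftInverse ha.le hx]
  by_contra! hlt
  have h0 : 0 ≤ (2 * leftInverse a x) ^ a := by positivity
  exact heq.not_gt (mul_lt_mul' hle (by linarith) (by linarith) (hy.trans_le hle))

lemma rpow_leftInverse_sub_le (ha : 0 < a) (hab : a ≤ b) (hx : x ∈ Ioc (0 : ℝ) 1) :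
    (2 * leftInverse a x) ^ a - (2 * leftInverse b x) ^ b ≤ (b - a) / a := by
  have hy0 := (leftInverse_mem ha.le hx).1
  refine le_trans ?_ (rpow_sub_rpow_le ha hab (u := 2 * leftInverse a x) (by linarith))
  gcongr
  · exact ha.le.trans hab
  · exact leftInverse_le_leftInverse ha hab hx

lemma leftInverse_le_exp_mul (ha : 0 < a) (hab : a ≤ b) (hx : x ∈ Ioc (0 : ℝ) 1) :
    leftInverse b x ≤ exp ((b - a) / a) * leftInverse a x := by
  have hb := ha.le.trans hab
  have hy := (leftInverse_mem ha.le hx).1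
  have hz := (leftInverse_mem hb hx).1
  have hdiff := rpow_leftInverse_sub_le ha hab hx
  have heq : leftBranch b (leftInverse b x) = leftBranch a (leftInverse a x) := by
    rw [leftBranch_leftInverse hb hx, leftBranch_leftInverse ha.le hx]
  unfold leftBranch at heq
  set D := (b - a) / a
  set η := (2 * leftInverse b x) ^ b
  have hη : 0 ≤ η := by positivity
  have hD : 0 ≤ D := div_nonneg (sub_nonneg.2 hab) ha.le
  have hlin : leftInverse b x ≤ (1 + D) * leftInverse a x := by
    refine le_of_mul_le_mul_right ?_ (by linarith : 0 < 1 + η)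
    rw [heq]
    nlinarith [mul_le_mul_of_nonneg_left hdiff hy.le, mul_nonneg (mul_nonneg hD hy.le) hη]
  exact hlin.trans (by gcongr; linarith [add_one_le_exp D])

lemma leftBranchDeriv_leftInverse_le_exp_mul (ha : 0 < a) (hab : a ≤ b) (hx : x ∈ Ioc (0 : ℝ) 1) :
    leftBranchDeriv b (leftInverse b x) ≤
      exp ((b - a) / a) * leftBranchDeriv a (leftInverse a x) := by
  have hy := (leftInverse_mem ha.le hx).1
  have hle := rpow_leftInverse_le ha hab hx
  have hb := ha.le.trans hab
  have hexp : b / a ≤ exp ((b - a) / a) := by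
    rw [sub_div, div_self ha.ne']
    linarith [add_one_le_exp (b / a - 1)]
  have hratio : 1 ≤ b / a := (one_le_div ha).2 hab
  calc leftBranchDeriv b (leftInverse b x) ≤ 1 + (1 + b) * (2 * leftInverse a x) ^ a := by
        unfold leftBranchDeriv
        gcongr
    _ ≤ b / a + (b / a + b / a * a) * (2 * leftInverse a x) ^ a := by
        rw [div_mul_cancel₀ b ha.ne']
        gcongr
    _ = b / a * leftBranchDeriv a (leftInverse a x) := by
        unfold leftBranchDeriv
        ring
    _ ≤ exp ((b - a) / a) * leftBranchDeriv a (leftInverse a x) := by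
        gcongr
        exact (leftBranchDeriv_pos ha.le hy.le).le

lemma leftBranchDeriv_leftInverse_le_exp_two_mul (ha : 0 < a) (ha1 : a ≤ 1) (hab : a ≤ b)
    (hx : x ∈ Ioc (0 : ℝ) 1) :
    leftBranchDeriv a (leftInverse a x) ≤
      exp (2 * ((b - a) / a)) * leftBranchDeriv b (leftInverse b x) := by
  have hb := ha.le.trans hab
  have hz := (leftInverse_mem hb hx).1
  have hdiff := rpow_leftInverse_sub_le ha hab hx
  set D := (b - a) / a
  have hD : 0 ≤ D := div_nonneg (sub_nonneg.2 hab) ha.le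
  have hderiv : 1 ≤ leftBranchDeriv b (leftInverse b x) := one_le_leftBranchDeriv hb hz.le
  have hadd : leftBranchDeriv a (leftInverse a x) ≤
      leftBranchDeriv b (leftInverse b x) + 2 * D := by
    have hη : 0 ≤ (2 * leftInverse b x) ^ b := by positivity
    unfold leftBranchDeriv
    nlinarith [mul_le_mul_of_nonneg_right ha1 hD, mul_le_mul_of_nonneg_right hab hη]
  calc leftBranchDeriv a (leftInverse a x)
      ≤ (1 + 2 * D) * leftBranchDeriv b (leftInverse b x) := by nlinarith
    _ ≤ exp (2 * D) * leftBranchDeriv b (leftInverse b x) := by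
        gcongr
        linarith [add_one_le_exp (2 * D)]

end ParameterDependence

/-- The cone of Liverani–Saussol–Vaienti of functions on the fibre: nonnegative nonincreasing
functions `g` on `(0, 1]` for which `x ^ (1 + A) * g x` is nondecreasing. -/
structure InFibreCone (A : ℝ) (g : ℝ → ℝ) : Prop where
  nonneg : ∀ x ∈ Ioc (0 : ℝ) 1, 0 ≤ g x
  antitoneOn : AntitoneOn g (Ioc 0 1)
  monotoneOn : MonotoneOn (fun x => x ^ (1 + A) * g x) (Ioc 0 1)

/-- The transfer operator of `T_a` with respect to Lebesgue measure, as a sum over the two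
inverse branches. It is meaningful at points of `(0, 1]`. -/
def lsvTransfer (a : ℝ) (g : ℝ → ℝ) (x : ℝ) : ℝ :=
  g (leftInverse a x) / leftBranchDeriv a (leftInverse a x) + g ((x + 1) / 2) / 2

section FibreCone

variable {a b c A D x y z : ℝ} {g : ℝ → ℝ}

lemma monotoneOn_rpow_div_one_add_mul (ha : 0 < a) (haA : a ≤ A) :
    MonotoneOn (fun ξ : ℝ => (1 + ξ) ^ (1 + A) / (1 + (1 + a) * ξ)) (Ici 0) := by
  intro ξ (hξ : 0 ≤ ξ) η (hη : 0 ≤ η) hξη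
  set q := (η - ξ) / (1 + ξ)
  have hq : 0 ≤ q := div_nonneg (sub_nonneg.2 hξη) (by linarith)
  have hη_eq : η = ξ + q * (1 + ξ) := by
    rw [div_mul_cancel₀ _ (by linarith), add_sub_cancel]
  have hfactor : 1 + η = (1 + ξ) * (1 + q) := by linear_combination hη_eq
  have hbernoulli : 1 + (1 + A) * q ≤ (1 + q) ^ (1 + A) :=
    one_add_mul_self_le_rpow_one_add (by linarith) (by linarith)
  have : 0 ≤ A - a := sub_nonneg.2 haA
  have hderiv : 0 < 1 + (1 + a) * ξ := by positivity
  have hpoly : 1 + (1 + a) * η ≤ (1 + (1 + A) * q) * (1 + (1 + a) * ξ) := by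
    have : 0 ≤ q * (A - a) + q * ξ * (a + a * a + (A - a) * (1 + a)) := by positivity
    rw [hη_eq]
    linarith
  dsimp only
  rw [div_le_div_iff₀ hderiv (by positivity), hfactor, mul_rpow (by linarith) (by linarith),
    mul_assoc]
  gcongr
  exact hpoly.trans (mul_le_mul_of_nonneg_right hbernoulli hderiv.le)

lemma leftBranch_rpow_le (ha : 0 ≤ a) (haA : a ≤ A) (hy : y ∈ Ioc 0 (1 / 2)) :
    leftBranch a y ^ A ≤ (2 * y) ^ a := by
  have hy0 := hy.1
  calc leftBranch a y ^ A ≤ (2 * y) ^ A :=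
        rpow_le_rpow (hy0.le.trans (le_leftBranch hy0.le))
          (leftBranch_le_two_mul ha ⟨hy0.le, hy.2⟩) (ha.trans haA)
    _ ≤ (2 * y) ^ a := rpow_le_rpow_of_exponent_ge (by linarith) (by linarith [hy.2]) haA

/-- The indifferent fixed point costs `x ^ (-A)` a definite amount under the left branch; this
leaves room for the contribution of the right branch. -/
lemma rpow_neg_div_leftBranchDeriv_add_le (ha : 0 < a) (haA : a ≤ A) (hA : A ≤ 1)
    (hy : y ∈ Ioc 0 (1 / 2)) :
    y ^ (-A) / leftBranchDeriv a y + (1 - A) / 3 ≤ leftBranch a y ^ (-A) := by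
  have hy0 := hy.1
  have hpos : 0 < leftBranch a y := hy0.trans_le (le_leftBranch hy0.le)
  have hD := one_le_leftBranchDeriv ha.le hy0.le
  have hξ := leftBranch_rpow_le ha.le haA hy
  set ξ := (2 * y) ^ a with hξ_def
  have hξ0 : 0 ≤ ξ := by positivity
  have hξ1 : ξ ≤ 1 := rpow_le_one (by linarith) (by linarith [hy.2]) ha.le
  have hscaled : leftBranch a y ^ A * y ^ (-A) = (1 + ξ) ^ A := by
    rw [leftBranch, mul_rpow hy0.le (by positivity), mul_right_comm, ← rpow_add hy0, add_neg_cancel,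
      rpow_zero, one_mul]
  have hcancel : leftBranch a y ^ A * leftBranch a y ^ (-A) = 1 := by
    rw [← rpow_add hpos, add_neg_cancel, rpow_zero]
  have hquot : (1 + ξ) ^ A / leftBranchDeriv a y ≤ 1 - (1 - A) / 3 * ξ := by
    rw [div_le_iff₀ (by linarith)]
    refine (rpow_one_add_le_one_add_mul_self (by linarith) (by linarith) hA).trans ?_
    have hle : leftBranchDeriv a y ≤ 3 := by
      unfold leftBranchDeriv
      nlinarith
    have hD_eq : leftBranchDeriv a y = 1 + ξ + a * ξ := by
      rw [leftBranchDeriv, ← hξ_def]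
      ring
    nlinarith [mul_le_mul_of_nonneg_left hle (mul_nonneg (sub_nonneg.2 hA) hξ0),
      mul_nonneg ha.le hξ0]
  refine le_of_mul_le_mul_left ?_ (rpow_pos_of_pos hpos A)
  rw [hcancel, mul_add, ← mul_div_assoc, hscaled]
  nlinarith

namespace InFibreCone

lemma le_exp_mul (hg : InFibreCone A g) (hA : -1 ≤ A) (hy : 0 < y) (hyz : y ≤ z) (hz : z ≤ 1)
    (hzy : z ≤ exp D * y) : g y ≤ exp ((1 + A) * D) * g z := by
  have hz0 : 0 < z := hy.trans_le hyz
  have hpow : z ^ (1 + A) ≤ exp ((1 + A) * D) * y ^ (1 + A) :=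
    calc z ^ (1 + A) ≤ (exp D * y) ^ (1 + A) := rpow_le_rpow hz0.le hzy (by linarith)
      _ = exp ((1 + A) * D) * y ^ (1 + A) := by
          rw [mul_rpow (exp_pos D).le hy.le, ← exp_mul, mul_comm D]
  refine le_of_mul_le_mul_left ?_ (rpow_pos_of_pos hy (1 + A))
  calc y ^ (1 + A) * g y ≤ z ^ (1 + A) * g z := hg.monotoneOn ⟨hy, hyz.trans hz⟩ ⟨hz0, hz⟩ hyz
    _ ≤ exp ((1 + A) * D) * y ^ (1 + A) * g z := by
        gcongr
        exact hg.nonneg z ⟨hz0, hz⟩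
    _ = y ^ (1 + A) * (exp ((1 + A) * D) * g z) := by ring

lemma lsvTransfer_nonneg (hg : InFibreCone A g) (ha : 0 ≤ a) (hx : x ∈ Ioc (0 : ℝ) 1) :
    0 ≤ lsvTransfer a g x :=
  add_nonneg
    (div_nonneg (hg.nonneg _ (leftInverse_mem_unit ha hx))
      (leftBranchDeriv_pos ha (leftInverse_mem ha hx).1.le).le)
    (div_nonneg (hg.nonneg _ (rightInverse_mem_unit hx)) two_pos.le)

lemma antitoneOn_lsvTransfer (hg : InFibreCone A g) (ha : 0 ≤ a) :
    AntitoneOn (lsvTransfer a g) (Ioc 0 1) := by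
  intro x hx z hz hxz
  have hinv := monotoneOn_leftInverse ha hx hz hxz
  have hx0 := (leftInverse_mem ha hx).1
  refine add_le_add (div_le_div₀ ?_ ?_ ?_ ?_) ?_
  · exact hg.nonneg _ (leftInverse_mem_unit ha hx)
  · exact hg.antitoneOn (leftInverse_mem_unit ha hx) (leftInverse_mem_unit ha hz) hinv
  · exact leftBranchDeriv_pos ha hx0.le
  · exact monotoneOn_leftBranchDeriv ha hx0.le (hx0.le.trans hinv) hinv
  · gcongr
    exact hg.antitoneOn (rightInverse_mem_unit hx) (rightInverse_mem_unit hz) (by linarith)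

lemma monotoneOn_rpow_mul_left (hg : InFibreCone A g) (ha : 0 < a) (haA : a ≤ A) :
    MonotoneOn (fun x => x ^ (1 + A) *
      (g (leftInverse a x) / leftBranchDeriv a (leftInverse a x))) (Ioc 0 1) := by
  have hfactor : ∀ y, 0 < y → leftBranch a y ^ (1 + A) * (g y / leftBranchDeriv a y) =
      y ^ (1 + A) * g y *
        ((1 + (2 * y) ^ a) ^ (1 + A) / (1 + (1 + a) * (2 * y) ^ a)) := by
    intro y hy
    rw [leftBranch, leftBranchDeriv, mul_rpow hy.le (by positivity)]
    ring
  intro x hx z hz hxz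
  have hx0 := (leftInverse_mem ha.le hx).1
  have hz0 := (leftInverse_mem ha.le hz).1
  have hinv := monotoneOn_leftInverse ha.le hx hz hxz
  have hxl := hfactor _ hx0
  have hzl := hfactor _ hz0
  rw [leftBranch_leftInverse ha.le hx] at hxl
  rw [leftBranch_leftInverse ha.le hz] at hzl
  dsimp only
  rw [hxl, hzl]
  refine mul_le_mul (hg.monotoneOn (leftInverse_mem_unit ha.le hx)
    (leftInverse_mem_unit ha.le hz) hinv) ?_ (by positivity) ?_
  · refine monotoneOn_rpow_div_one_add_mul ha haA ?_ ?_ ?_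
    · exact rpow_nonneg (by positivity) a
    · exact rpow_nonneg (by positivity) a
    · gcongr
  · exact mul_nonneg (by positivity) (hg.nonneg _ (leftInverse_mem_unit ha.le hz))

lemma monotoneOn_rpow_mul_right (hg : InFibreCone A g) (hA : -1 ≤ A) :
    MonotoneOn (fun x => x ^ (1 + A) * (g ((x + 1) / 2) / 2)) (Ioc 0 1) := by
  have hfactor : ∀ x, 0 < x → x ^ (1 + A) * (g ((x + 1) / 2) / 2) =
      ((x + 1) / 2) ^ (1 + A) * g ((x + 1) / 2) * ((2 * x / (x + 1)) ^ (1 + A) / 2) := by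
    intro x hx
    have hsplit : x ^ (1 + A) = ((x + 1) / 2) ^ (1 + A) * (2 * x / (x + 1)) ^ (1 + A) := by
      rw [← mul_rpow (by positivity) (by positivity)]
      congr 1
      field_simp
    rw [hsplit]
    ring
  intro x hx z hz hxz
  have hx0 := hx.1
  have hz0 := hz.1
  have hz' := rightInverse_mem_unit hz
  have hgz := hg.nonneg _ hz'
  dsimp only
  rw [hfactor x hx0, hfactor z hz0]
  refine mul_le_mul (hg.monotoneOn (rightInverse_mem_unit hx) hz' (by linarith)) ?_
    (by positivity) (by positivity)
  gcongr ?_ / 2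
  refine rpow_le_rpow (by positivity) ?_ (by linarith)
  rw [div_le_div_iff₀ (by linarith) (by linarith)]
  nlinarith

protected lemma lsvTransfer (hg : InFibreCone A g) (ha : 0 < a) (haA : a ≤ A) :
    InFibreCone A (lsvTransfer a g) where
  nonneg _ hx := hg.lsvTransfer_nonneg ha.le hx
  antitoneOn := hg.antitoneOn_lsvTransfer ha.le
  monotoneOn := by
    simp only [_root_.lsvTransfer, mul_add]
    exact (hg.monotoneOn_rpow_mul_left ha haA).add (hg.monotoneOn_rpow_mul_right (by linarith))

lemma left_le_exp_mul_of_le (hg : InFibreCone A g) (hA : A ≤ 1) (ha : 0 < a) (hab : a ≤ b)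
    (hbA : b ≤ A) (hx : x ∈ Ioc (0 : ℝ) 1) :
    g (leftInverse a x) / leftBranchDeriv a (leftInverse a x) ≤
      exp (4 * ((b - a) / a)) *
        (g (leftInverse b x) / leftBranchDeriv b (leftInverse b x)) := by
  have hb := ha.trans_le hab
  have hy := leftInverse_mem_unit ha.le hx
  have hz := leftInverse_mem_unit hb.le hx
  have hDa := leftBranchDeriv_pos ha.le hy.1.le
  have hDb := leftBranchDeriv_pos hb.le hz.1.le
  have hgz := hg.nonneg _ hz
  have hvalue := hg.le_exp_mul (by linarith) hy.1 (leftInverse_le_leftInverse ha hab hx) hz.2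
    (leftInverse_le_exp_mul ha hab hx)
  have hderiv := leftBranchDeriv_leftInverse_le_exp_mul ha hab hx
  have : 0 ≤ (b - a) / a := div_nonneg (sub_nonneg.2 hab) ha.le
  rw [← mul_div_assoc, div_le_div_iff₀ hDa hDb]
  calc g (leftInverse a x) * leftBranchDeriv b (leftInverse b x)
      ≤ (exp ((1 + A) * ((b - a) / a)) * g (leftInverse b x)) *
          (exp ((b - a) / a) * leftBranchDeriv a (leftInverse a x)) :=
        mul_le_mul hvalue hderiv hDb.le (by positivity)
    _ = exp ((2 + A) * ((b - a) / a)) * g (leftInverse b x) *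
          leftBranchDeriv a (leftInverse a x) := by
        rw [show (2 + A) * ((b - a) / a) = (1 + A) * ((b - a) / a) + (b - a) / a by ring, exp_add]
        ring
    _ ≤ exp (4 * ((b - a) / a)) * g (leftInverse b x) * leftBranchDeriv a (leftInverse a x) := by
        gcongr
        linarith

lemma left_le_exp_mul_of_ge (hg : InFibreCone A g) (hb : 0 < b) (hba : b ≤ a) (hb1 : b ≤ 1)
    (hx : x ∈ Ioc (0 : ℝ) 1) :
    g (leftInverse a x) / leftBranchDeriv a (leftInverse a x) ≤
      exp (2 * ((a - b) / b)) *
        (g (leftInverse b x) / leftBranchDeriv b (leftInverse b x)) := by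
  have ha := hb.trans_le hba
  have hy := leftInverse_mem_unit ha.le hx
  have hz := leftInverse_mem_unit hb.le hx
  have hDa := leftBranchDeriv_pos ha.le hy.1.le
  have hDb := leftBranchDeriv_pos hb.le hz.1.le
  rw [← mul_div_assoc, div_le_div_iff₀ hDa hDb, mul_assoc, mul_left_comm]
  exact mul_le_mul (hg.antitoneOn hz hy (leftInverse_le_leftInverse hb hba hx))
    (leftBranchDeriv_leftInverse_le_exp_two_mul hb hb1 hba hx) hDb.le (hg.nonneg _ hz)

lemma left_le_exp_mul (hg : InFibreCone A g) (hA : A ≤ 1) (hc : 0 < c) (hca : c ≤ a) (hcb : c ≤ b)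
    (hbA : b ≤ A) (hx : x ∈ Ioc (0 : ℝ) 1) :
    g (leftInverse a x) / leftBranchDeriv a (leftInverse a x) ≤
      exp (4 / c * |a - b|) *
        (g (leftInverse b x) / leftBranchDeriv b (leftInverse b x)) := by
  have ha := hc.trans_le hca
  have hb := hc.trans_le hcb
  have hz := leftInverse_mem_unit hb.le hx
  have hgz : 0 ≤ g (leftInverse b x) / leftBranchDeriv b (leftInverse b x) :=
    div_nonneg (hg.nonneg _ hz) (leftBranchDeriv_pos hb.le hz.1.le).le
  rcases le_total a b with hab | hba
  · refine (hg.left_le_exp_mul_of_le hA ha hab hbA hx).trans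
      (mul_le_mul_of_nonneg_right (exp_le_exp.2 ?_) hgz)
    have hsub := sub_nonneg.2 hab
    rw [div_mul_comm, mul_comm _ (4 : ℝ), abs_sub_comm, abs_of_nonneg hsub]
    gcongr
  · refine (hg.left_le_exp_mul_of_ge hb hba (hbA.trans hA) hx).trans
      (mul_le_mul_of_nonneg_right (exp_le_exp.2 ?_) hgz)
    have hsub := sub_nonneg.2 hba
    rw [div_mul_comm, mul_comm _ (4 : ℝ), abs_of_nonneg hsub]
    gcongr
    norm_num

lemma lsvTransfer_le_exp_mul (hg : InFibreCone A g) (hA : A ≤ 1) (hc : 0 < c) (hca : c ≤ a)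
    (hcb : c ≤ b) (hbA : b ≤ A) (hx : x ∈ Ioc (0 : ℝ) 1) :
    lsvTransfer a g x ≤ exp (4 / c * |a - b|) * lsvTransfer b g x := by
  rw [lsvTransfer, lsvTransfer, mul_add]
  refine add_le_add (hg.left_le_exp_mul hA hc hca hcb hbA hx) ?_
  have hgx := hg.nonneg _ (rightInverse_mem_unit hx)
  exact le_mul_of_one_le_left (by positivity) (one_le_exp (by positivity))

lemma lsvTransfer_le_mul_rpow_neg (hg : InFibreCone A g) (ha : 0 < a) (haA : a ≤ A)
    (hA : A ≤ 1) (hD0 : 0 ≤ D) (hhalf : g (1 / 2) / 2 ≤ D * ((1 - A) / 3))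
    (hgD : ∀ y ∈ Ioc (0 : ℝ) 1, g y ≤ D * y ^ (-A)) (hx : x ∈ Ioc (0 : ℝ) 1) :
    lsvTransfer a g x ≤ D * x ^ (-A) := by
  have hy := leftInverse_mem ha.le hx
  have hDy := leftBranchDeriv_pos ha.le hy.1.le
  have hleft : g (leftInverse a x) / leftBranchDeriv a (leftInverse a x) ≤
      D * (leftInverse a x ^ (-A) / leftBranchDeriv a (leftInverse a x)) := by
    rw [← mul_div_assoc]
    gcongr
    exact hgD _ (leftInverse_mem_unit ha.le hx)
  have hright : g ((x + 1) / 2) ≤ g (1 / 2) :=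
    hg.antitoneOn ⟨by norm_num, by norm_num⟩ (rightInverse_mem_unit hx) (rightInverse_mem hx).1.le
  have hroom := mul_le_mul_of_nonneg_left
    (rpow_neg_div_leftBranchDeriv_add_le ha haA hA hy) hD0
  rw [leftBranch_leftInverse ha.le hx] at hroom
  unfold _root_.lsvTransfer
  linarith

end InFibreCone

end FibreCone

section FibreDuality

variable {a : ℝ}

lemma setLIntegral_leftBranch (ha : 0 ≤ a) (G : ℝ → ℝ≥0∞) :
    ∫⁻ y in Ioc 0 (1 / 2), G y = ∫⁻ x in Ioc 0 1,
      ENNReal.ofReal (leftBranchDeriv a (leftInverse a x))⁻¹ * G (leftInverse a x) := by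
  have hbij := bijOn_leftBranch ha
  have hchange := lintegral_image_eq_lintegral_abs_deriv_mul measurableSet_Ioc
    (fun y hy => (hasDerivAt_leftBranch (a := a) hy.1).hasDerivWithinAt) hbij.injOn
    fun x => ENNReal.ofReal (leftBranchDeriv a (leftInverse a x))⁻¹ * G (leftInverse a x)
  rw [hbij.image_eq] at hchange
  rw [hchange]
  refine setLIntegral_congr_fun measurableSet_Ioc fun y hy => ?_
  have hD := leftBranchDeriv_pos ha hy.1.le
  rw [leftInverse_leftBranch ha hy, ← mul_assoc, ← ENNReal.ofReal_mul (abs_nonneg _),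
    abs_of_pos hD, mul_inv_cancel₀ hD.ne', ENNReal.ofReal_one, one_mul]

lemma setLIntegral_rightBranch (G : ℝ → ℝ≥0∞) :
    ∫⁻ y in Ioc (1 / 2) 1, G y = ∫⁻ x in Ioc 0 1, ENNReal.ofReal 2⁻¹ * G ((x + 1) / 2) := by
  have himage : (fun x : ℝ => (x + 1) / 2) '' Ioc 0 1 = Ioc (1 / 2) 1 := by
    refine Subset.antisymm (image_subset_iff.2 fun x hx => rightInverse_mem hx) fun y hy => ?_
    exact ⟨2 * y - 1, ⟨by linarith [hy.1], by linarith [hy.2]⟩, by ring⟩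
  have hderiv : ∀ x : ℝ, HasDerivAt (fun x : ℝ => (x + 1) / 2) 2⁻¹ x := fun x => by
    simpa only [one_div] using ((hasDerivAt_id' x).add_const 1).div_const 2
  have hinj : Function.Injective fun x : ℝ => (x + 1) / 2 := fun x y hxy => by
    dsimp only at hxy
    linarith
  rw [← himage, lintegral_image_eq_lintegral_abs_deriv_mul measurableSet_Ioc
    (fun x _ => (hderiv x).hasDerivWithinAt) hinj.injOn, abs_of_pos (by norm_num)]

lemma measurable_Ta (ha : 0 ≤ a) : Measurable (Ta a) :=
  Measurable.ite measurableSet_Iic (continuous_leftBranch ha).measurable (by fun_prop)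

lemma setLIntegral_lsvTransfer_mul (ha : 0 ≤ a) {g : ℝ → ℝ} (hg : Measurable g)
    (hg0 : ∀ x, 0 ≤ g x) {φ : ℝ → ℝ≥0∞} (hφ : Measurable φ) :
    ∫⁻ x in Ioc 0 1, ENNReal.ofReal (lsvTransfer a g x) * φ x =
      ∫⁻ y in Ioc 0 1, ENNReal.ofReal (g y) * φ (Ta a y) := by
  have hTa := measurable_Ta ha
  have hunit : Ioc (0 : ℝ) 1 = Ioc 0 (1 / 2) ∪ Ioc (1 / 2) 1 :=
    (Ioc_union_Ioc_eq_Ioc (by norm_num) (by norm_num)).symm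
  conv_rhs => rw [hunit, lintegral_union measurableSet_Ioc (Ioc_disjoint_Ioc_of_le le_rfl),
    setLIntegral_leftBranch ha, setLIntegral_rightBranch, ← lintegral_add_right _ (by fun_prop)]
  refine setLIntegral_congr_fun measurableSet_Ioc fun x hx => ?_
  have hD := leftBranchDeriv_pos ha (leftInverse_mem ha hx).1.le
  rw [Ta_leftInverse ha hx, Ta_rightInverse hx, lsvTransfer,
    ENNReal.ofReal_add (div_nonneg (hg0 _) hD.le) (div_nonneg (hg0 _) two_pos.le), add_mul,
    div_eq_inv_mul, div_eq_inv_mul (g _), ENNReal.ofReal_mul (inv_nonneg.2 hD.le),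
    ENNReal.ofReal_mul (by norm_num), mul_assoc, mul_assoc]

end FibreDuality

section Circle

/-- The `k`-th solution `(t + k) / n` of `n • η = ω`, where `t ∈ [0, 1)` represents `ω`. -/
def circleRoot (n k : ℕ) (ω : S1) : S1 := (((AddCircle.equivIco 1 0 ω : ℝ) + k) / n : ℝ)

variable {n k : ℕ}

lemma measurable_circleRoot : Measurable (circleRoot n k) := by
  have hlift : Measurable fun ω : S1 => (AddCircle.equivIco 1 0 ω : ℝ) :=
    measurable_subtype_coe.comp (AddCircle.measurableEquivIco 1 0).measurable
  exact AddCircle.measurable_mk'.comp ((hlift.add_const _).div_const _)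

lemma nsmul_coe_div [NeZero n] (t : ℝ) : n • ((t / n : ℝ) : S1) = t := by
  rw [← AddCircle.coe_nsmul, nsmul_eq_mul, mul_div_cancel₀ t (NeZero.ne (n : ℝ))]

lemma coe_natCast_eq_zero (k : ℕ) : ((k : ℝ) : S1) = 0 :=
  AddCircle.coe_eq_zero_iff 1 |>.2 ⟨k, by simp⟩

lemma nsmul_circleRoot [NeZero n] (ω : S1) : n • circleRoot n k ω = ω := by
  rw [circleRoot, nsmul_coe_div, AddCircle.coe_add, coe_natCast_eq_zero, add_zero,
    AddCircle.coe_equivIco]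

lemma periodic_sum_coe_div [NeZero n] {E : Type*} [AddCommMonoid E] (g : S1 → E) :
    Function.Periodic (fun t : ℝ => ∑ k ∈ Finset.range n, g ((t + k) / n : ℝ)) 1 := by
  intro t
  obtain ⟨m, rfl⟩ := Nat.exists_eq_succ_of_ne_zero (NeZero.ne n)
  have hwrap : (((t + 1 + m) / (m + 1 : ℕ) : ℝ) : S1) = ((t / (m + 1 : ℕ) : ℝ) : S1) := by
    have : (t + 1 + m) / (m + 1 : ℕ) = t / (m + 1 : ℕ) + 1 := by
      push_cast
      field_simp
      ring
    rw [this, AddCircle.coe_add, AddCircle.coe_period, add_zero]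
  have hshift (k : ℕ) : t + 1 + k = t + (k + 1 : ℕ) := by push_cast; ring
  simp only [Nat.succ_eq_add_one]
  rw [Finset.sum_range_succ, Finset.sum_range_succ', hwrap]
  simp only [hshift, Nat.cast_zero, add_zero]

lemma sum_circleRoot [NeZero n] {E : Type*} [AddCommMonoid E] (g : S1 → E) (t : ℝ) :
    ∑ k ∈ Finset.range n, g (circleRoot n k t) = ∑ k ∈ Finset.range n, g ((t + k) / n : ℝ) := by
  have hfract : (AddCircle.equivIco 1 0 (t : S1) : ℝ) = t - ⌊t⌋ * 1 := by
    rw [AddCircle.coe_equivIco_mk_apply, div_one, mul_one, mul_one, Int.self_sub_floor]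
  simp only [circleRoot, hfract]
  exact (periodic_sum_coe_div g).sub_int_mul_eq ⌊t⌋

lemma sum_circleRoot_nsmul [NeZero n] {E : Type*} [AddCommMonoid E] (g : S1 → E) (η : S1) :
    ∑ k ∈ Finset.range n, g (circleRoot n k (n • η)) =
      ∑ k ∈ Finset.range n, g (η + (k / n : ℝ)) := by
  induction η using QuotientAddGroup.induction_on with | H t =>
  have hn : (n : ℝ) ≠ 0 := NeZero.ne (n : ℝ)
  have hdiv (k : ℕ) : (n * t + k) / n = t + k / n := by field_simp
  calc ∑ k ∈ Finset.range n, g (circleRoot n k (n • (t : S1)))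
    _ = ∑ k ∈ Finset.range n, g ((n * t + k) / n : ℝ) := by
      rw [← AddCircle.coe_nsmul, nsmul_eq_mul, sum_circleRoot]
    _ = ∑ k ∈ Finset.range n, g (t + (k / n : ℝ)) := by simp only [hdiv, AddCircle.coe_add]

lemma lintegral_sum_circleRoot [NeZero n] {g : S1 → ℝ≥0∞} (hg : Measurable g) :
    ∫⁻ ω, ∑ k ∈ Finset.range n, g (circleRoot n k ω) = n * ∫⁻ ω, g ω := by
  have hpres : MeasurePreserving (fun ω : S1 => n • ω) := by
    simpa only [natCast_zsmul] using
      Measure.measurePreserving_zsmul (volume : Measure S1) (Int.natCast_ne_zero.2 (NeZero.ne n))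
  have hmeas : Measurable fun ω => ∑ k ∈ Finset.range n, g (circleRoot n k ω) :=
    Finset.measurable_fun_sum _ fun k _ => hg.comp measurable_circleRoot
  calc ∫⁻ ω, ∑ k ∈ Finset.range n, g (circleRoot n k ω)
    _ = ∫⁻ ω, ∑ k ∈ Finset.range n, g (circleRoot n k (n • ω)) :=
      (hpres.lintegral_comp hmeas).symm
    _ = ∫⁻ ω, ∑ k ∈ Finset.range n, g (ω + (k / n : ℝ)) := by simp only [sum_circleRoot_nsmul]
    _ = ∑ k ∈ Finset.range n, ∫⁻ ω, g (ω + (k / n : ℝ)) :=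
      lintegral_finsetSum _ fun k _ => hg.comp (measurable_add_const _)
    _ = n * ∫⁻ ω, g ω := by
      simp only [lintegral_add_right_eq_self g, Finset.sum_const, Finset.card_range,
        nsmul_eq_mul]

lemma exists_coe_eq_abs_eq_norm (ω : S1) : ∃ t : ℝ, (t : S1) = ω ∧ |t| = ‖ω‖ := by
  induction ω using QuotientAddGroup.induction_on with | H t =>
  refine ⟨t - round t, ?_, UnitAddCircle.norm_eq.symm⟩
  have hround : ((round t : ℝ) : S1) = 0 := (AddCircle.coe_eq_zero_iff 1).2 ⟨round t, by simp⟩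
  rw [AddCircle.coe_sub, hround, sub_zero]

lemma norm_coe_circle_le (t : ℝ) : ‖(t : S1)‖ ≤ |t| :=
  QuotientAddGroup.norm_mk_le_norm

lemma dist_circle_le_one (ω η : S1) : dist ω η ≤ 1 := by
  have := AddCircle.norm_le_half_period 1 (x := ω - η) one_ne_zero
  rw [abs_one] at this
  rw [dist_eq_norm]
  linarith

lemma exists_nsmul_eq_dist_le [NeZero n] (ω η : S1) :
    ∃ ξ, n • ξ = ω ∧ dist ξ η ≤ dist ω (n • η) / n := by
  obtain ⟨t, ht, hnorm⟩ := exists_coe_eq_abs_eq_norm (ω - n • η)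
  refine ⟨η + (t / n : ℝ), ?_, ?_⟩
  · rw [smul_add, nsmul_coe_div, ht, add_sub_cancel]
  · calc dist (η + (t / n : ℝ)) η
      _ = ‖((t / n : ℝ) : S1)‖ := by rw [dist_eq_norm, add_sub_cancel_left]
      _ ≤ |t / n| := norm_coe_circle_le _
      _ = dist ω (n • η) / n := by rw [abs_div, Nat.abs_cast, hnorm, dist_eq_norm]

end Circle

namespace InFibreCone

variable {A c x ε : ℝ} {g h : ℝ → ℝ}

lemma zero : InFibreCone A 0 where
  nonneg _ _ := le_rfl
  antitoneOn := antitoneOn_const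
  monotoneOn := by simpa only [Pi.zero_apply, mul_zero] using monotoneOn_const

lemma add (hg : InFibreCone A g) (hh : InFibreCone A h) : InFibreCone A (g + h) where
  nonneg x hx := add_nonneg (hg.nonneg x hx) (hh.nonneg x hx)
  antitoneOn := hg.antitoneOn.add hh.antitoneOn
  monotoneOn := by simpa only [Pi.add_apply, mul_add] using hg.monotoneOn.add hh.monotoneOn

lemma smul (hg : InFibreCone A g) (hc : 0 ≤ c) : InFibreCone A (c • g) where
  nonneg x hx := mul_nonneg hc (hg.nonneg x hx)
  antitoneOn x hx y hy hxy := mul_le_mul_of_nonneg_left (hg.antitoneOn hx hy hxy) hc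
  monotoneOn x hx y hy hxy := by
    simpa only [Pi.smul_apply, smul_eq_mul, mul_left_comm] using
      mul_le_mul_of_nonneg_left (hg.monotoneOn hx hy hxy) hc

lemma inf (hg : InFibreCone A g) (hh : InFibreCone A h) : InFibreCone A (g ⊓ h) where
  nonneg x hx := le_inf (hg.nonneg x hx) (hh.nonneg x hx)
  antitoneOn := hg.antitoneOn.inf hh.antitoneOn
  monotoneOn := by
    refine (hg.monotoneOn.inf hh.monotoneOn).congr fun x hx => ?_
    exact (mul_min_of_nonneg _ _ (rpow_nonneg hx.1.le _)).symm

lemma sum {ι : Type*} {s : Finset ι} {g : ι → ℝ → ℝ} (hg : ∀ i ∈ s, InFibreCone A (g i)) :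
    InFibreCone A (∑ i ∈ s, g i) :=
  Finset.sum_induction g (InFibreCone A) (fun _ _ => add) zero hg

lemma congr (hg : InFibreCone A g) (hgh : EqOn g h (Ioc 0 1)) : InFibreCone A h where
  nonneg x hx := (hg.nonneg x hx).trans_eq (hgh hx)
  antitoneOn := hg.antitoneOn.congr hgh
  monotoneOn := hg.monotoneOn.congr fun x hx => congrArg (x ^ (1 + A) * ·) (hgh hx)

lemma le_add_mul_dist (hg : InFibreCone A g) (hA : 0 ≤ A) (hε : 0 < ε) {x y : ℝ}
    (hx : x ∈ Icc ε 1) (hy : y ∈ Icc ε 1) : g x ≤ g y + g ε * (1 + A) / ε * dist x y := by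
  have hx0 : 0 < x := hε.trans_le hx.1
  have hy0 : 0 < y := hε.trans_le hy.1
  have hgx : g x ≤ g ε := hg.antitoneOn ⟨hε, hx.1.trans hx.2⟩ ⟨hx0, hx.2⟩ hx.1
  have hgx0 : 0 ≤ g x := hg.nonneg x ⟨hx0, hx.2⟩
  have hgε : 0 ≤ g ε := hgx0.trans hgx
  rcases le_total y x with hyx | hxy
  · exact (hg.antitoneOn ⟨hy0, hy.2⟩ ⟨hx0, hx.2⟩ hyx).trans
      (le_add_of_nonneg_right (by positivity))
  have hscale : (x / y) ^ (1 + A) * g x ≤ g y := by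
    rw [div_rpow hx0.le hy0.le, div_mul_eq_mul_div, div_le_iff₀ (by positivity), mul_comm (g y)]
    exact hg.monotoneOn ⟨hx0, hx.2⟩ ⟨hy0, hy.2⟩ hxy
  have hbernoulli : 1 - (1 + A) * (1 - x / y) ≤ (x / y) ^ (1 + A) := by
    have := one_add_mul_self_le_rpow_one_add (s := x / y - 1) (by linarith [div_pos hx0 hy0])
      (p := 1 + A) (by linarith)
    rw [add_sub_cancel] at this
    linarith
  have hdist : 1 - x / y ≤ dist x y / ε := by
    rw [dist_comm, Real.dist_eq, abs_of_nonneg (sub_nonneg.2 hxy), one_sub_div hy0.ne']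
    exact div_le_div_of_nonneg_left (sub_nonneg.2 hxy) hε hy.1
  have : 0 ≤ 1 - x / y := sub_nonneg.2 ((div_le_one hy0).2 hxy)
  calc g x = (1 - (1 + A) * (1 - x / y)) * g x + (1 + A) * (1 - x / y) * g x := by ring
    _ ≤ (x / y) ^ (1 + A) * g x + (1 + A) * (dist x y / ε) * g ε := by gcongr
    _ ≤ g y + g ε * (1 + A) / ε * dist x y := by
      rw [show (1 + A) * (dist x y / ε) * g ε = g ε * (1 + A) / ε * dist x y by ring]
      exact add_le_add_left hscale _

end InFibreCone

/-- The part `S¹ × (0, 1]` of the phase space that carries the densities. -/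
def strip : Set (S1 × ℝ) := univ ×ˢ Ioc 0 1

/-- The cone of densities: functions carried by `strip` whose restrictions to the fibres lie in
`InFibreCone A` and whose logarithm is `B`-Lipschitz along the base. -/
structure InDensityCone (A B : ℝ) (f : S1 × ℝ → ℝ) : Prop where
  eq_zero : ∀ z ∉ strip, f z = 0
  fibre : ∀ ω, InFibreCone A (fun x => f (ω, x))
  le_exp_mul : ∀ ω η x, f (ω, x) ≤ exp (B * dist ω η) * f (η, x)

lemma mem_strip {z : S1 × ℝ} : z ∈ strip ↔ z.2 ∈ Ioc 0 1 := by
  simp only [strip, mem_prod, mem_univ, true_and]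

lemma measurableSet_strip : MeasurableSet strip := MeasurableSet.univ.prod measurableSet_Ioc

namespace InDensityCone

variable {A B c ε V : ℝ} {f g : S1 × ℝ → ℝ}

lemma nonneg (hf : InDensityCone A B f) (z : S1 × ℝ) : 0 ≤ f z := by
  by_cases hz : z ∈ strip
  · exact (hf.fibre z.1).nonneg z.2 (mem_strip.1 hz)
  · exact (hf.eq_zero z hz).ge

lemma zero : InDensityCone A B 0 where
  eq_zero _ _ := rfl
  fibre _ := InFibreCone.zero
  le_exp_mul _ _ _ := by simp only [Pi.zero_apply, mul_zero, le_rfl]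

lemma add (hf : InDensityCone A B f) (hg : InDensityCone A B g) : InDensityCone A B (f + g) where
  eq_zero z hz := by rw [Pi.add_apply, hf.eq_zero z hz, hg.eq_zero z hz, add_zero]
  fibre ω := (hf.fibre ω).add (hg.fibre ω)
  le_exp_mul ω η x := by
    rw [Pi.add_apply, Pi.add_apply, mul_add]
    exact add_le_add (hf.le_exp_mul ω η x) (hg.le_exp_mul ω η x)

lemma smul (hf : InDensityCone A B f) (hc : 0 ≤ c) : InDensityCone A B (c • f) where
  eq_zero z hz := by rw [Pi.smul_apply, hf.eq_zero z hz, smul_zero]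
  fibre ω := (hf.fibre ω).smul hc
  le_exp_mul ω η x := by
    simpa only [Pi.smul_apply, smul_eq_mul, mul_left_comm] using
      mul_le_mul_of_nonneg_left (hf.le_exp_mul ω η x) hc

lemma inf (hf : InDensityCone A B f) (hg : InDensityCone A B g) : InDensityCone A B (f ⊓ g) where
  eq_zero z hz := by rw [Pi.inf_apply, hf.eq_zero z hz, hg.eq_zero z hz, inf_idem]
  fibre ω := (hf.fibre ω).inf (hg.fibre ω)
  le_exp_mul ω η x := by
    rw [Pi.inf_apply, Pi.inf_apply, mul_min_of_nonneg _ _ (exp_pos _).le]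
    exact min_le_min (hf.le_exp_mul ω η x) (hg.le_exp_mul ω η x)

lemma le_exp_mul_of_mem (hf : InDensityCone A B f) (hB : 0 ≤ B) (ω η : S1) (x : ℝ) :
    f (ω, x) ≤ exp B * f (η, x) := by
  have := hf.nonneg (η, x)
  refine (hf.le_exp_mul ω η x).trans ?_
  gcongr
  exact mul_le_of_le_one_right hB (dist_circle_le_one ω η)

lemma le_add_mul_dist (hf : InDensityCone A B f) (hB : 0 ≤ B) {ω η : S1} {x : ℝ}
    (hV : f (η, x) ≤ V) : f (ω, x) ≤ f (η, x) + V * (B * exp B) * dist ω η := by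
  have hf0 := hf.nonneg (η, x)
  have : 0 ≤ V := hf0.trans hV
  have hBd : B * dist ω η ≤ B := mul_le_of_le_one_right hB (dist_circle_le_one ω η)
  have hexp : exp (B * dist ω η) ≤ 1 + B * dist ω η * exp (B * dist ω η) := by
    have := mul_le_mul_of_nonneg_left (one_sub_le_exp_neg (B * dist ω η))
      (exp_pos (B * dist ω η)).le
    rw [← exp_add, add_neg_cancel, exp_zero] at this
    linarith
  calc f (ω, x) ≤ exp (B * dist ω η) * f (η, x) := hf.le_exp_mul ω η x
    _ ≤ (1 + B * dist ω η * exp B) * f (η, x) := by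
      gcongr
      exact hexp.trans (by gcongr)
    _ = f (η, x) + f (η, x) * (B * exp B) * dist ω η := by ring
    _ ≤ f (η, x) + V * (B * exp B) * dist ω η := by gcongr

lemma lipschitzOnWith (hf : InDensityCone A B f) (hA : 0 ≤ A) (hB : 0 ≤ B) (hε : 0 < ε)
    (hV : ∀ ω, f (ω, ε) ≤ V) :
    LipschitzOnWith (V * (B * exp B + (1 + A) / ε)).toNNReal f (univ ×ˢ Icc ε 1) := by
  have hV0 : 0 ≤ V := (hf.nonneg (0, ε)).trans (hV 0)
  refine LipschitzOnWith.of_le_add_mul _ ?_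
  rintro ⟨ω, x⟩ ⟨-, hx⟩ ⟨η, y⟩ ⟨-, hy⟩
  have hfη : f (η, x) ≤ V := ((hf.fibre η).antitoneOn ⟨hε, hx.1.trans hx.2⟩
    ⟨hε.trans_le hx.1, hx.2⟩ hx.1).trans (hV η)
  rw [coe_toNNReal _ (by positivity), Prod.dist_eq]
  calc f (ω, x) ≤ f (η, x) + V * (B * exp B) * dist ω η := hf.le_add_mul_dist hB hfη
    _ ≤ f (η, y) + f (η, ε) * (1 + A) / ε * dist x y + V * (B * exp B) * dist ω η := by
      gcongr
      exact (hf.fibre η).le_add_mul_dist hA hε hx hy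
    _ ≤ f (η, y) + V * (1 + A) / ε * max (dist ω η) (dist x y)
        + V * (B * exp B) * max (dist ω η) (dist x y) := by
      gcongr
      exacts [hV η, le_max_right _ _, le_max_left _ _]
    _ = f (η, y) + V * (B * exp B + (1 + A) / ε) * max (dist ω η) (dist x y) := by ring

lemma exists_lipschitzOnWith (hf : InDensityCone A B f) (hA : 0 ≤ A) (hB : 0 ≤ B) (hε : 0 < ε) :
    ∃ L : ℝ≥0, LipschitzOnWith L f (univ ×ˢ Icc ε 1) :=
  ⟨_, hf.lipschitzOnWith hA hB hε fun ω => hf.le_exp_mul_of_mem hB ω 0 ε⟩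

lemma exists_lipschitzOnWith_of_isCompact (hf : InDensityCone A B f) (hA : 0 ≤ A) (hB : 0 ≤ B)
    {K : Set (S1 × ℝ)} (hK : IsCompact K) (hKs : K ⊆ strip) :
    ∃ L : ℝ≥0, LipschitzOnWith L f K := by
  obtain rfl | hne := K.eq_empty_or_nonempty
  · exact ⟨0, lipschitzOnWith_empty _ _⟩
  obtain ⟨z, hz, hmin⟩ := hK.exists_isMinOn hne continuousOn_snd
  obtain ⟨L, hL⟩ := hf.exists_lipschitzOnWith hA hB (hKs hz).2.1
  exact ⟨L, hL.mono fun w hw => ⟨mem_univ _, hmin hw, (hKs hw).2.2⟩⟩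

end InDensityCone

lemma univ_prod_Icc_mem_nhdsWithin {z : S1 × ℝ} (hz : z ∈ strip) :
    univ ×ˢ Icc (z.2 / 2) 1 ∈ 𝓝[strip] z := by
  have hhalf : z.2 / 2 < z.2 := half_lt_self hz.2.1
  have hopen : Prod.snd ⁻¹' Ioi (z.2 / 2) ∈ 𝓝 z :=
    (isOpen_Ioi.preimage continuous_snd).mem_nhds hhalf
  filter_upwards [mem_nhdsWithin_of_mem_nhds hopen, self_mem_nhdsWithin] with w hw hws
  exact ⟨mem_univ _, le_of_lt hw, hws.2.2⟩

namespace InDensityCone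

variable {A B : ℝ} {f : S1 × ℝ → ℝ}

lemma continuousOn (hf : InDensityCone A B f) (hA : 0 ≤ A) (hB : 0 ≤ B) :
    ContinuousOn f strip := by
  intro z hz
  obtain ⟨L, hL⟩ := hf.exists_lipschitzOnWith hA hB (half_pos hz.2.1)
  have hmem := univ_prod_Icc_mem_nhdsWithin hz
  exact (hL.continuousOn z (mem_of_mem_nhdsWithin hz hmem)).mono_of_mem_nhdsWithin hmem

lemma measurable (hf : InDensityCone A B f) (hA : 0 ≤ A) (hB : 0 ≤ B) : Measurable f := by
  classical
  have hpiece : strip.piecewise f 0 = f := by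
    ext z
    by_cases hz : z ∈ strip
    · exact piecewise_eq_of_mem _ _ _ hz
    · rw [piecewise_eq_of_notMem _ _ _ hz, hf.eq_zero z hz, Pi.zero_apply]
  rw [← hpiece]
  exact (hf.continuousOn hA hB).measurable_piecewise continuousOn_const measurableSet_strip

end InDensityCone

lemma isClosed_setOf_inFibreCone (A : ℝ) : IsClosed {g | InFibreCone A g} := by
  have heq : {g | InFibreCone A g} = (⋂ x ∈ Ioc (0 : ℝ) 1, {g | 0 ≤ g x}) ∩
      {g | AntitoneOn g (Ioc 0 1)} ∩ {g | MonotoneOn (fun x => x ^ (1 + A) * g x) (Ioc 0 1)} := by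
    ext g
    simp only [mem_inter_iff, mem_iInter, mem_ofPred_eq]
    exact ⟨fun h => ⟨⟨h.nonneg, h.antitoneOn⟩, h.monotoneOn⟩,
      fun h => ⟨h.1.1, h.1.2, h.2⟩⟩
  have hmul : Continuous fun (g : ℝ → ℝ) (x : ℝ) => x ^ (1 + A) * g x :=
    continuous_pi fun x => continuous_const.mul (continuous_apply x)
  rw [heq]
  exact ((isClosed_biInter fun x _ => isClosed_le continuous_const (continuous_apply x)).inter
    isClosed_antitoneOn).inter (isClosed_monotoneOn.preimage hmul)

lemma isClosed_setOf_inDensityCone (A B : ℝ) : IsClosed {f | InDensityCone A B f} := by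
  have heq : {f | InDensityCone A B f} = (⋂ z ∈ stripᶜ, {f | f z = 0}) ∩
      (⋂ ω, {f | InFibreCone A (fun x => f (ω, x))}) ∩
      ⋂ (ω) (η) (x), {f | f (ω, x) ≤ exp (B * dist ω η) * f (η, x)} := by
    ext f
    simp only [mem_inter_iff, mem_iInter, mem_ofPred_eq]
    exact ⟨fun h => ⟨⟨h.eq_zero, h.fibre⟩, h.le_exp_mul⟩, fun h => ⟨h.1.1, h.1.2, h.2⟩⟩
  rw [heq]
  refine ((isClosed_biInter fun z _ => isClosed_eq (continuous_apply z) continuous_const).inter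
    (isClosed_iInter fun ω => ?_)).inter (isClosed_iInter fun ω => isClosed_iInter fun η =>
      isClosed_iInter fun x =>
        isClosed_le (continuous_apply _) (continuous_const.mul (continuous_apply _)))
  exact (isClosed_setOf_inFibreCone A).preimage
    (continuous_pi fun x => continuous_apply ((ω, x) : S1 × ℝ))

/-- The densities in the cone that are bounded by `D x ^ (-A)`, a compact set for pointwise
convergence. -/
def boundedCone (A B D : ℝ) : Set (S1 × ℝ → ℝ) :=
  {f | InDensityCone A B f ∧ ∀ z ∈ strip, f z ≤ D * z.2 ^ (-A)}

section BoundedCone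

variable {A B D : ℝ} {f : S1 × ℝ → ℝ}

lemma mem_Icc_of_mem_boundedCone (hf : f ∈ boundedCone A B D) (z : S1 × ℝ) :
    f z ∈ Icc 0 |D * z.2 ^ (-A)| := by
  refine ⟨hf.1.nonneg z, ?_⟩
  by_cases hz : z ∈ strip
  · exact (hf.2 z hz).trans (le_abs_self _)
  · exact (hf.1.eq_zero z hz).trans_le (abs_nonneg _)

lemma isCompact_boundedCone : IsCompact (boundedCone A B D) := by
  have hclosed : IsClosed (boundedCone A B D) := by
    have heq : boundedCone A B D =
        {f | InDensityCone A B f} ∩ ⋂ z ∈ strip, {f | f z ≤ D * z.2 ^ (-A)} := by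
      ext f
      simp only [boundedCone, mem_inter_iff, mem_iInter, mem_ofPred_eq]
    rw [heq]
    exact (isClosed_setOf_inDensityCone A B).inter
      (isClosed_biInter fun z _ => isClosed_le (continuous_apply z) continuous_const)
  refine (isCompact_univ_pi fun z : S1 × ℝ =>
    isCompact_Icc (a := 0) (b := |D * z.2 ^ (-A)|)).of_isClosed_subset hclosed
    fun f hf z _ => mem_Icc_of_mem_boundedCone hf z

lemma equicontinuousOn_boundedCone (hA : 0 ≤ A) (hB : 0 ≤ B) :
    EquicontinuousOn (fun f : boundedCone A B D => (f : S1 × ℝ → ℝ)) strip := by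
  intro z hz
  have hε : 0 < z.2 / 2 := half_pos hz.2.1
  have hε1 : z.2 / 2 ≤ 1 := (half_le_self hz.2.1.le).trans hz.2.2
  have hmem := univ_prod_Icc_mem_nhdsWithin hz
  have hbound (f : boundedCone A B D) (ω : S1) : f.1 (ω, z.2 / 2) ≤ D * (z.2 / 2) ^ (-A) :=
    f.2.2 (ω, z.2 / 2) ⟨mem_univ _, hε, hε1⟩
  have hequi := LipschitzOnWith.uniformEquicontinuousOn
    (fun f : boundedCone A B D => (f : S1 × ℝ → ℝ)) _ fun f =>
      f.2.1.lipschitzOnWith hA hB hε (hbound f)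
  intro U hU
  exact nhdsWithin_le_of_mem hmem
    (hequi.equicontinuousOn z (mem_of_mem_nhdsWithin hz hmem) U hU)

lemma exists_subseq_tendsto_boundedCone (hA : 0 ≤ A) (hB : 0 ≤ B) {f : ℕ → S1 × ℝ → ℝ}
    (hf : ∀ n, f n ∈ boundedCone A B D) :
    ∃ g ∈ boundedCone A B D, ∃ φ : ℕ → ℕ, StrictMono φ ∧
      ∀ z, Tendsto (fun n => f (φ n) z) atTop (𝓝 (g z)) := by
  have hstrip : strip = Prod.snd ⁻¹' Ioc 0 1 := ext fun _ => mem_strip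
  have : LocallyCompactSpace strip :=
    (hstrip ▸ isLocallyClosed_Ioc.preimage continuous_snd).locallyCompactSpace
  let S : Set C(strip, ℝ) := {g | ∃ f ∈ boundedCone A B D, ⇑g = strip.domRestrict f}
  have hpointwise : IsCompact (ContinuousMap.toFun '' S) := by
    have himage : ContinuousMap.toFun '' S = strip.domRestrict '' boundedCone A B D := by
      ext g
      constructor
      · rintro ⟨g, ⟨f, hf, hgf⟩, rfl⟩
        exact ⟨f, hf, hgf.symm⟩
      · rintro ⟨f, hf, rfl⟩
        exact ⟨⟨_, (hf.1.continuousOn hA hB).domRestrict⟩, ⟨f, hf, rfl⟩, rfl⟩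
    rw [himage]
    exact isCompact_boundedCone.image (continuous_pi fun z => continuous_apply (z : S1 × ℝ))
  have hequi : Equicontinuous ((↑) : S → strip → ℝ) := by
    choose F hF hSF using fun g : S => g.2
    have := (equicontinuous_restrict_iff _).2 (equicontinuousOn_boundedCone (D := D) hA hB)
    convert this.comp fun g : S => (⟨F g, hF g⟩ : boundedCone A B D) using 2 with g
    exact hSF g
  obtain ⟨g, ⟨k, hk, hgk⟩, φ, hφ, hlim⟩ :=
    (ArzelaAscoli.isCompact_of_equicontinuous S hpointwise hequi).tendsto_subseq
      fun n => show (⟨_, ((hf n).1.continuousOn hA hB).domRestrict⟩ : C(strip, ℝ)) ∈ S from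
        ⟨f n, hf n, rfl⟩
  refine ⟨k, hk, φ, hφ, fun z => ?_⟩
  by_cases hz : z ∈ strip
  · have := ((continuous_eval_const (⟨z, hz⟩ : strip)).tendsto g).comp hlim
    rwa [hgk] at this
  · simpa only [hk.1.eq_zero z hz, (hf _).1.eq_zero z hz] using tendsto_const_nhds

end BoundedCone

/-- The bounds on `α` under which the cone `InDensityCone A B` is preserved by the transfer
operator: `α` takes values in `[c, A] ⊆ (0, 1)` and is `c * B / 4`-Lipschitz. -/
structure ConeParameters (α : S1 → ℝ) (c A B : ℝ) : Prop where
  pos : 0 < c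
  le : ∀ ω, c ≤ α ω
  le_upper : ∀ ω, α ω ≤ A
  upper_lt_one : A < 1
  one_le : 1 ≤ B
  mul_abs_sub_le : ∀ ω η, 4 / c * |α ω - α η| ≤ B * dist ω η

namespace ConeParameters

variable {α : S1 → ℝ} {c A B : ℝ}

lemma map_pos (H : ConeParameters α c A B) (ω : S1) : 0 < α ω := H.pos.trans_le (H.le ω)

lemma upper_pos (H : ConeParameters α c A B) : 0 < A := (H.map_pos 0).trans_le (H.le_upper 0)

lemma nonneg (H : ConeParameters α c A B) : 0 ≤ B := zero_le_one.trans H.one_le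

lemma exists_of_lipschitzWith {Λ : ℝ≥0} (hα : LipschitzWith Λ α) (h0 : ∀ ω, 0 < α ω)
    (h1 : ∀ ω, α ω < 1) : ∃ c A B, ConeParameters α c A B := by
  obtain ⟨ω₀, -, hmin⟩ := isCompact_univ.exists_isMinOn univ_nonempty hα.continuous.continuousOn
  obtain ⟨ω₁, -, hmax⟩ := isCompact_univ.exists_isMaxOn univ_nonempty hα.continuous.continuousOn
  have hc : 0 < 4 / α ω₀ := div_pos four_pos (h0 ω₀)
  refine ⟨α ω₀, α ω₁, max 1 (4 / α ω₀ * Λ), h0 ω₀, fun ω => hmin (mem_univ ω),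
    fun ω => hmax (mem_univ ω), h1 ω₁, le_max_left _ _, fun ω η => ?_⟩
  calc 4 / α ω₀ * |α ω - α η| ≤ 4 / α ω₀ * (Λ * dist ω η) :=
        mul_le_mul_of_nonneg_left (hα.dist_le_mul ω η) hc.le
    _ = 4 / α ω₀ * Λ * dist ω η := by ring
    _ ≤ max 1 (4 / α ω₀ * Λ) * dist ω η := by gcongr; exact le_max_right _ _

lemma measurable (H : ConeParameters α c A B) : Measurable α := by
  have hlip : LipschitzWith (c * B / 4).toNNReal α := by
    refine LipschitzWith.of_dist_le_mul fun ω η => ?_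
    have hc := H.pos
    rw [coe_toNNReal _ (by have := H.nonneg; positivity), Real.dist_eq]
    calc |α ω - α η| = c / 4 * (4 / c * |α ω - α η|) := by field_simp
      _ ≤ c / 4 * (B * dist ω η) :=
        mul_le_mul_of_nonneg_left (H.mul_abs_sub_le ω η) (by positivity)
      _ = c * B / 4 * dist ω η := by ring
  exact hlip.continuous.measurable

end ConeParameters

section Operators

variable {α : S1 → ℝ} {n : ℕ} {f g : S1 × ℝ → ℝ} {z : S1 × ℝ}

/-- The transfer operator of `(ω, x) ↦ (ω, T_{α(ω)} x)`, set to zero outside `strip`. -/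
def fibreTransfer (α : S1 → ℝ) : (S1 × ℝ → ℝ) →ₗ[ℝ] (S1 × ℝ → ℝ) where
  toFun f := strip.indicator fun z => lsvTransfer (α z.1) (fun y => f (z.1, y)) z.2
  map_add' f g := by
    rw [← indicator_add']
    congr 1 with z
    simp only [lsvTransfer, Pi.add_apply]
    ring
  map_smul' r f := by
    ext z
    rw [RingHom.id_apply, Pi.smul_apply, ← indicator_const_smul_apply]
    congr 1 with z
    simp only [lsvTransfer, Pi.smul_apply, smul_eq_mul]
    ring

/-- The transfer operator of `(ω, x) ↦ (n • ω, x)`. -/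
def baseTransfer (n : ℕ) : (S1 × ℝ → ℝ) →ₗ[ℝ] (S1 × ℝ → ℝ) where
  toFun f z := (∑ k ∈ Finset.range n, f (circleRoot n k z.1, z.2)) / n
  map_add' f g := by
    ext z
    simp only [Pi.add_apply, Finset.sum_add_distrib, add_div]
  map_smul' r f := by
    ext z
    simp only [Pi.smul_apply, smul_eq_mul, RingHom.id_apply, ← Finset.mul_sum, mul_div_assoc]

/-- The transfer operator of the skew product, as the composition of its action along the fibres
and along the base. -/
def transfer (α : S1 → ℝ) : (S1 × ℝ → ℝ) →ₗ[ℝ] (S1 × ℝ → ℝ) :=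
  baseTransfer 4 ∘ₗ fibreTransfer α

lemma fibreTransfer_of_mem (hz : z ∈ strip) :
    fibreTransfer α f z = lsvTransfer (α z.1) (fun y => f (z.1, y)) z.2 :=
  indicator_of_mem hz fun z : S1 × ℝ => lsvTransfer (α z.1) (fun y => f (z.1, y)) z.2

lemma fibreTransfer_of_notMem (hz : z ∉ strip) : fibreTransfer α f z = 0 :=
  indicator_of_notMem hz fun z : S1 × ℝ => lsvTransfer (α z.1) (fun y => f (z.1, y)) z.2

lemma baseTransfer_apply (n : ℕ) (f : S1 × ℝ → ℝ) (z : S1 × ℝ) :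
    baseTransfer n f z = (∑ k ∈ Finset.range n, f (circleRoot n k z.1, z.2)) / n := rfl

lemma transfer_apply (f : S1 × ℝ → ℝ) (z : S1 × ℝ) :
    transfer α f z =
      (∑ k ∈ Finset.range 4, fibreTransfer α f (circleRoot 4 k z.1, z.2)) / (4 : ℕ) := rfl

lemma lsvTransfer_mono {a x : ℝ} {g h : ℝ → ℝ} (ha : 0 ≤ a) (hx : x ∈ Ioc (0 : ℝ) 1)
    (hgh : ∀ y ∈ Ioc 0 1, g y ≤ h y) : lsvTransfer a g x ≤ lsvTransfer a h x :=
  add_le_add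
    (div_le_div_of_nonneg_right (hgh _ (leftInverse_mem_unit ha hx))
      (leftBranchDeriv_pos ha (leftInverse_mem ha hx).1.le).le)
    (div_le_div_of_nonneg_right (hgh _ (rightInverse_mem_unit hx)) two_pos.le)

lemma lsvTransfer_const_mul {a x : ℝ} (r : ℝ) (g : ℝ → ℝ) :
    lsvTransfer a (fun y => r * g y) x = r * lsvTransfer a g x := by
  simp only [lsvTransfer]
  ring

lemma monotone_fibreTransfer (hα : ∀ ω, 0 ≤ α ω) : Monotone (fibreTransfer α) := by
  intro f g hfg z
  by_cases hz : z ∈ strip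
  · rw [fibreTransfer_of_mem hz, fibreTransfer_of_mem hz]
    exact lsvTransfer_mono (hα _) (mem_strip.1 hz) fun y _ => hfg (z.1, y)
  · rw [fibreTransfer_of_notMem hz, fibreTransfer_of_notMem hz]

lemma monotone_baseTransfer : Monotone (baseTransfer n) := fun _ _ hfg _ =>
  div_le_div_of_nonneg_right (Finset.sum_le_sum fun _ _ => hfg _) n.cast_nonneg

lemma monotone_transfer (hα : ∀ ω, 0 ≤ α ω) : Monotone (transfer α) :=
  monotone_baseTransfer.comp (monotone_fibreTransfer hα)

lemma continuous_transfer : Continuous (transfer α) := by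
  have hfibre : Continuous (fibreTransfer α) := by
    refine continuous_pi fun z => ?_
    by_cases hz : z ∈ strip
    · simp only [fibreTransfer_of_mem hz, lsvTransfer]
      fun_prop
    · simp only [fibreTransfer_of_notMem hz, continuous_const]
  refine continuous_pi fun z => ?_
  simp only [transfer_apply]
  fun_prop

end Operators

namespace InDensityCone

variable {α : S1 → ℝ} {c A B B' : ℝ} {n : ℕ} {f : S1 × ℝ → ℝ}

lemma mono (hf : InDensityCone A B f) (hB : B ≤ B') : InDensityCone A B' f where
  eq_zero := hf.eq_zero
  fibre := hf.fibre
  le_exp_mul ω η x := by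
    have := hf.nonneg (η, x)
    refine (hf.le_exp_mul ω η x).trans ?_
    gcongr

protected lemma fibreTransfer (hf : InDensityCone A B f) (H : ConeParameters α c A B) :
    InDensityCone A (2 * B) (fibreTransfer α f) where
  eq_zero z hz := fibreTransfer_of_notMem hz
  fibre ω := by
    have hcone := (hf.fibre ω).lsvTransfer (H.map_pos ω) (H.le_upper ω)
    exact hcone.congr fun x hx => (fibreTransfer_of_mem (z := (ω, x)) (mem_strip.2 hx)).symm
  le_exp_mul ω η x := by
    by_cases hx : x ∈ Ioc 0 1
    · rw [fibreTransfer_of_mem (mem_strip.2 hx), fibreTransfer_of_mem (mem_strip.2 hx)]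
      have := (hf.fibre η).lsvTransfer_nonneg (H.map_pos η).le hx
      calc lsvTransfer (α ω) (fun y => f (ω, y)) x
        _ ≤ exp (4 / c * |α ω - α η|) * lsvTransfer (α η) (fun y => f (ω, y)) x :=
          (hf.fibre ω).lsvTransfer_le_exp_mul H.upper_lt_one.le H.pos (H.le ω) (H.le η)
            (H.le_upper η) hx
        _ ≤ exp (B * dist ω η) *
            lsvTransfer (α η) (fun y => exp (B * dist ω η) * f (η, y)) x := by
          have := (hf.fibre ω).lsvTransfer_nonneg (H.map_pos η).le hx
          refine mul_le_mul (exp_le_exp.2 (H.mul_abs_sub_le ω η)) ?_ this (exp_pos _).le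
          exact lsvTransfer_mono (H.map_pos η).le hx fun y _ => hf.le_exp_mul ω η y
        _ = exp (2 * B * dist ω η) * lsvTransfer (α η) (fun y => f (η, y)) x := by
          rw [lsvTransfer_const_mul, ← mul_assoc, ← exp_add]
          ring_nf
    · have hnotMem (ω : S1) : (ω, x) ∉ strip := fun h => hx (mem_strip.1 h)
      rw [fibreTransfer_of_notMem (hnotMem ω), fibreTransfer_of_notMem (hnotMem η), mul_zero]

protected lemma baseTransfer [NeZero n] (hf : InDensityCone A B f) (hB : 0 ≤ B) :
    InDensityCone A (B / n) (baseTransfer n f) where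
  eq_zero z hz := by
    have hzero (k : ℕ) : f (circleRoot n k z.1, z.2) = 0 :=
      hf.eq_zero _ fun h => hz (mem_strip.2 (mem_strip.1 h))
    simp only [baseTransfer_apply, hzero, Finset.sum_const_zero, zero_div]
  fibre ω := by
    have hcone : InFibreCone A ((n : ℝ)⁻¹ • ∑ k ∈ Finset.range n, fun x =>
        f (circleRoot n k ω, x)) :=
      (InFibreCone.sum fun k _ => hf.fibre _).smul (by positivity)
    refine hcone.congr fun x _ => ?_
    rw [baseTransfer_apply, Pi.smul_apply, Finset.sum_apply, smul_eq_mul, inv_mul_eq_div]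
  le_exp_mul ω η x := by
    obtain ⟨s, hs, hnorm⟩ := exists_coe_eq_abs_eq_norm (ω - η)
    induction η using QuotientAddGroup.induction_on with | H t =>
    obtain rfl : ((t + s : ℝ) : S1) = ω := by rw [AddCircle.coe_add, hs, add_sub_cancel]
    have hdist (k : ℕ) : dist (((t + s + k) / n : ℝ) : S1) ((t + k) / n : ℝ) ≤
        dist ((t + s : ℝ) : S1) t / n := by
      rw [dist_eq_norm, ← AddCircle.coe_sub, dist_eq_norm, ← hnorm]
      refine (norm_coe_circle_le _).trans_eq ?_
      rw [← sub_div, abs_div, Nat.abs_cast]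
      congr 2
      ring
    rw [baseTransfer_apply, baseTransfer_apply, sum_circleRoot fun ξ => f (ξ, x),
      sum_circleRoot fun ξ => f (ξ, x), ← mul_div_assoc, Finset.mul_sum]
    refine div_le_div_of_nonneg_right (Finset.sum_le_sum fun k _ => ?_) n.cast_nonneg
    have := hf.nonneg (((t + k) / n : ℝ), x)
    refine (hf.le_exp_mul _ ((t + k) / n : ℝ) x).trans ?_
    rw [div_mul_eq_mul_div, mul_div_assoc]
    gcongr
    exact hdist k

protected lemma transfer (hf : InDensityCone A B f) (H : ConeParameters α c A B) :
    InDensityCone A B (transfer α f) :=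
  ((hf.fibreTransfer H).baseTransfer (n := 4) (by have := H.nonneg; positivity)).mono
    (by have := H.nonneg; push_cast; linarith)

end InDensityCone

/-- The measure with density `f` with respect to `Leb`. -/
def densityMeasure (f : S1 × ℝ → ℝ) : Measure (S1 × ℝ) :=
  Leb.withDensity fun z => ENNReal.ofReal (f z)

lemma Leb_eq_prod_Ioc : Leb = (volume : Measure S1).prod (volume.restrict (Ioc (0 : ℝ) 1)) := by
  rw [Leb, Measure.restrict_congr_set Ioc_ae_eq_Icc]

instance : IsProbabilityMeasure (volume : Measure S1) := ⟨UnitAddCircle.measure_univ⟩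

instance : IsProbabilityMeasure (volume.restrict (Ioc (0 : ℝ) 1)) := ⟨by simp⟩

instance : IsProbabilityMeasure Leb := by
  rw [Leb_eq_prod_Ioc]
  infer_instance

lemma Leb_compl_strip : Leb stripᶜ = 0 := by
  have hcompl : stripᶜ = univ ×ˢ (Ioc (0 : ℝ) 1)ᶜ := by
    ext z
    simp only [mem_compl_iff, mem_strip, mem_prod, mem_univ, true_and]
  rw [Leb_eq_prod_Ioc, hcompl, Measure.prod_prod, Measure.restrict_apply measurableSet_Ioc.compl,
    compl_inter_self, measure_empty, mul_zero]

lemma ae_mem_strip : ∀ᵐ z ∂Leb, z ∈ strip := Leb_compl_strip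

section Duality

variable {α : S1 → ℝ} {c A B : ℝ} {n : ℕ} {f : S1 × ℝ → ℝ} {φ : S1 × ℝ → ℝ≥0∞}

lemma lintegral_Leb {F : S1 × ℝ → ℝ≥0∞} (hF : Measurable F) :
    ∫⁻ z, F z ∂Leb = ∫⁻ ω, ∫⁻ x in Ioc 0 1, F (ω, x) := by
  rw [Leb_eq_prod_Ioc, lintegral_prod _ hF.aemeasurable]

lemma lintegral_Leb_symm {F : S1 × ℝ → ℝ≥0∞} (hF : Measurable F) :
    ∫⁻ z, F z ∂Leb = ∫⁻ x in Ioc 0 1, ∫⁻ ω, F (ω, x) := by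
  rw [Leb_eq_prod_Ioc, lintegral_prod_symm _ hF.aemeasurable]

lemma lintegral_densityMeasure (hf : Measurable f) (hφ : Measurable φ) :
    ∫⁻ z, φ z ∂densityMeasure f = ∫⁻ z, ENNReal.ofReal (f z) * φ z ∂Leb :=
  lintegral_withDensity_eq_lintegral_mul _ hf.ennreal_ofReal hφ

/-- The fibre map `(ω, x) ↦ (ω, T_{α(ω)} x)` of the skew product. -/
def fibreMap (α : S1 → ℝ) (z : S1 × ℝ) : S1 × ℝ := (z.1, Ta (α z.1) z.2)

lemma measurable_fibreMap (hα : Measurable α) : Measurable (fibreMap α) := by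
  refine measurable_fst.prodMk (Measurable.ite (measurable_snd measurableSet_Iic) ?_ ?_)
  all_goals fun_prop

lemma Tskew_eq_comp : Tskew α = (fun z => (4 • z.1, z.2)) ∘ fibreMap α := rfl

lemma measurable_nsmul_prodMk (n : ℕ) : Measurable fun z : S1 × ℝ => (n • z.1, z.2) :=
  (((continuous_nsmul n).comp continuous_fst).prodMk continuous_snd).measurable

lemma measurable_Tskew (hα : Measurable α) : Measurable (Tskew α) :=
  (measurable_nsmul_prodMk 4).comp (measurable_fibreMap hα)

lemma lintegral_fibreTransfer_mul (hα : ∀ ω, 0 ≤ α ω) (hf : Measurable f) (hf0 : ∀ z, 0 ≤ f z)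
    (hφ : Measurable φ) (ω : S1) :
    ∫⁻ x in Ioc 0 1, ENNReal.ofReal (fibreTransfer α f (ω, x)) * φ (ω, x) =
      ∫⁻ x in Ioc 0 1, ENNReal.ofReal (f (ω, x)) * φ (fibreMap α (ω, x)) := by
  have hdual := setLIntegral_lsvTransfer_mul (hα ω) (hf.comp (measurable_prodMk_left (x := ω)))
    (fun x => hf0 (ω, x)) (hφ.comp (measurable_prodMk_left (x := ω)))
  refine (setLIntegral_congr_fun measurableSet_Ioc fun x hx => ?_).trans hdual
  rw [fibreTransfer_of_mem (mem_strip.2 hx)]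
  rfl

lemma map_fibreMap_densityMeasure (H : ConeParameters α c A B) (hf : InDensityCone A B f) :
    (densityMeasure f).map (fibreMap α) = densityMeasure (fibreTransfer α f) := by
  have hfm := hf.measurable H.upper_pos.le H.nonneg
  have htm := (hf.fibreTransfer H).measurable H.upper_pos.le (by have := H.nonneg; positivity)
  have hmap := measurable_fibreMap H.measurable
  refine Measure.ext_of_lintegral _ fun φ hφ => ?_
  have hφmap : Measurable fun z => φ (fibreMap α z) := hφ.comp hmap
  rw [lintegral_map hφ hmap, lintegral_densityMeasure hfm hφmap,
    lintegral_densityMeasure htm hφ, lintegral_Leb (by fun_prop),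
    lintegral_Leb (by fun_prop)]
  exact lintegral_congr fun ω => (lintegral_fibreTransfer_mul (fun ω => (H.map_pos ω).le) hfm
    hf.nonneg hφ ω).symm

lemma lintegral_sum_circleRoot_div_mul [NeZero n] {g : S1 → ℝ} (hg : Measurable g)
    (hg0 : ∀ ω, 0 ≤ g ω) {φ : S1 → ℝ≥0∞} (hφ : Measurable φ) :
    ∫⁻ ω, ENNReal.ofReal ((∑ k ∈ Finset.range n, g (circleRoot n k ω)) / n) * φ ω =
      ∫⁻ ω, ENNReal.ofReal (g ω) * φ (n • ω) := by
  have hn : (n : ℝ≥0∞) ≠ 0 := NeZero.ne _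
  have hmeas : Measurable fun ω => ENNReal.ofReal (g ω) * φ (n • ω) :=
    hg.ennreal_ofReal.mul (hφ.comp (continuous_nsmul n).measurable)
  have hpoint (ω : S1) :
      ENNReal.ofReal ((∑ k ∈ Finset.range n, g (circleRoot n k ω)) / n) * φ ω =
        (n : ℝ≥0∞)⁻¹ * ∑ k ∈ Finset.range n,
          ENNReal.ofReal (g (circleRoot n k ω)) * φ (n • circleRoot n k ω) := by
    simp only [nsmul_circleRoot]
    rw [ENNReal.ofReal_div_of_pos (Nat.cast_pos.2 (NeZero.pos n)), ENNReal.ofReal_natCast,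
      ENNReal.ofReal_sum_of_nonneg fun k _ => hg0 _, ← Finset.sum_mul, div_eq_mul_inv]
    ring
  simp only [hpoint]
  rw [lintegral_const_mul' _ _ (ENNReal.inv_ne_top.2 hn), lintegral_sum_circleRoot hmeas,
    ← mul_assoc, ENNReal.inv_mul_cancel hn (ENNReal.natCast_ne_top n), one_mul]

lemma map_nsmul_densityMeasure [NeZero n] (hf : Measurable f) (hf0 : ∀ z, 0 ≤ f z) :
    (densityMeasure f).map (fun z => (n • z.1, z.2)) = densityMeasure (baseTransfer n f) := by
  have hmap := measurable_nsmul_prodMk n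
  have htm : Measurable (baseTransfer n f) :=
    (Finset.measurable_fun_sum _ fun k _ => hf.comp
      ((measurable_circleRoot.comp measurable_fst).prodMk measurable_snd)).div_const _
  refine Measure.ext_of_lintegral _ fun φ hφ => ?_
  have hφmap : Measurable fun z : S1 × ℝ => φ (n • z.1, z.2) := hφ.comp hmap
  rw [lintegral_map hφ hmap, lintegral_densityMeasure hf hφmap,
    lintegral_densityMeasure htm hφ, lintegral_Leb_symm (by fun_prop),
    lintegral_Leb_symm (by fun_prop)]
  refine lintegral_congr fun x => ?_
  exact (lintegral_sum_circleRoot_div_mul (hf.comp measurable_prodMk_right) (fun ω => hf0 (ω, x))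
    (hφ.comp measurable_prodMk_right)).symm

lemma map_Tskew_densityMeasure (H : ConeParameters α c A B) (hf : InDensityCone A B f) :
    (densityMeasure f).map (Tskew α) = densityMeasure (transfer α f) := by
  have hcone := hf.fibreTransfer H
  rw [Tskew_eq_comp,
    ← Measure.map_map (measurable_nsmul_prodMk 4) (measurable_fibreMap H.measurable),
    map_fibreMap_densityMeasure H hf, map_nsmul_densityMeasure
      (hcone.measurable H.upper_pos.le (by have := H.nonneg; positivity)) hcone.nonneg]
  rfl

end Duality

section Existence

variable {α : S1 → ℝ} {c A B D M : ℝ} {n : ℕ} {f g : S1 × ℝ → ℝ}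

lemma densityMeasure_add (hf : Measurable f) (hf0 : ∀ z, 0 ≤ f z) (hg0 : ∀ z, 0 ≤ g z) :
    densityMeasure (f + g) = densityMeasure f + densityMeasure g := by
  simp only [densityMeasure, Pi.add_apply, ENNReal.ofReal_add (hf0 _) (hg0 _)]
  exact withDensity_add_left hf.ennreal_ofReal _

lemma densityMeasure_smul {r : ℝ} (hr : 0 ≤ r) (f : S1 × ℝ → ℝ) :
    densityMeasure (r • f) = ENNReal.ofReal r • densityMeasure f := by
  simp only [densityMeasure, Pi.smul_apply, smul_eq_mul, ENNReal.ofReal_mul hr]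
  exact withDensity_smul' _ _ ENNReal.ofReal_ne_top

lemma convex_setOf_densityMeasure_eq (hA : 0 ≤ A) (hB : 0 ≤ B) (E : Set (S1 × ℝ)) (q : ℝ≥0∞) :
    Convex ℝ {f | f ∈ boundedCone A B D ∧ densityMeasure f E = q} := by
  rintro f ⟨⟨hf, hfD⟩, hfE⟩ g ⟨⟨hg, hgD⟩, hgE⟩ a b ha hb hab
  have hfa := hf.smul ha
  have hgb := hg.smul hb
  refine ⟨⟨hfa.add hgb, fun z hz => ?_⟩, ?_⟩
  · calc a * f z + b * g z ≤ a * (D * z.2 ^ (-A)) + b * (D * z.2 ^ (-A)) := by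
          gcongr
          exacts [hfD z hz, hgD z hz]
      _ = D * z.2 ^ (-A) := by rw [← add_mul, hab, one_mul]
  · rw [densityMeasure_add (hfa.measurable hA hB) hfa.nonneg hgb.nonneg, densityMeasure_smul ha,
      densityMeasure_smul hb, Measure.add_apply, Measure.smul_apply, Measure.smul_apply, hfE, hgE,
      ← add_smul, ← ENNReal.ofReal_add ha hb, hab, ENNReal.ofReal_one, one_smul]

lemma lintegral_ofReal_mul_rpow_neg_ne_top (hA : A < 1) :
    ∫⁻ z, ENNReal.ofReal (D * z.2 ^ (-A)) ∂Leb ≠ ⊤ := by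
  have hint : IntegrableOn (fun x : ℝ => D * x ^ (-A)) (Ioc 0 1) :=
    (intervalIntegrable_iff_integrableOn_Ioc_of_le zero_le_one).1
      ((intervalIntegral.intervalIntegrable_rpow' (by linarith)).const_mul D)
  rw [lintegral_Leb (by fun_prop)]
  simp only [lintegral_const, measure_univ, mul_one]
  exact hint.lintegral_lt_top.ne

lemma tendsto_densityMeasure_of_mem_boundedCone (hA0 : 0 ≤ A) (hA : A < 1) (hB : 0 ≤ B)
    {f : ℕ → S1 × ℝ → ℝ} (hf : ∀ n, f n ∈ boundedCone A B D)
    (hlim : ∀ z, Tendsto (fun n => f n z) atTop (𝓝 (g z))) {E : Set (S1 × ℝ)}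
    (hE : MeasurableSet E) :
    Tendsto (fun n => densityMeasure (f n) E) atTop (𝓝 (densityMeasure g E)) := by
  simp only [densityMeasure, withDensity_apply _ hE]
  refine tendsto_lintegral_of_dominated_convergence (fun z => ENNReal.ofReal (D * z.2 ^ (-A)))
    (fun n => ((hf n).1.measurable hA0 hB).ennreal_ofReal) (fun n => ?_)
    (ne_top_of_le_ne_top (lintegral_ofReal_mul_rpow_neg_ne_top hA)
      (setLIntegral_le_lintegral E _))
    (Eventually.of_forall fun z => ENNReal.tendsto_ofReal (hlim z))
  filter_upwards [ae_restrict_of_ae ae_mem_strip] with z hz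
  exact ENNReal.ofReal_le_ofReal ((hf n).2 z hz)

/-- The densities in `boundedCone A B (3 * M / (1 - A))` whose integral over each fibre is at most
`M`. The mass bound controls the density at `x = 1 / 2`, and `3 * M / (1 - A)` is the smallest
constant for which this suffices to make the set invariant under the transfer operator. -/
def massCone (A B M : ℝ) : Set (S1 × ℝ → ℝ) :=
  {f | f ∈ boundedCone A B (3 * M / (1 - A)) ∧
    ∀ ω, ∫⁻ x in Ioc 0 1, ENNReal.ofReal (f (ω, x)) ≤ ENNReal.ofReal M}

lemma mem_massCone_of_le (hf : InDensityCone A B f) (hA0 : 0 ≤ A) (hA : A < 1) (hM : 0 ≤ M)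
    (hfM : ∀ z, f z ≤ M) : f ∈ massCone A B M := by
  refine ⟨⟨hf, fun z hz => ?_⟩, fun ω => ?_⟩
  · have hD : M ≤ 3 * M / (1 - A) := by
      rw [le_div_iff₀ (by linarith)]
      nlinarith
    calc f z ≤ M * 1 := (hfM z).trans_eq (mul_one M).symm
      _ ≤ 3 * M / (1 - A) * z.2 ^ (-A) :=
        mul_le_mul hD (one_le_rpow_of_pos_of_le_one_of_nonpos hz.2.1 hz.2.2 (by linarith))
          zero_le_one (hM.trans hD)
  · calc ∫⁻ x in Ioc 0 1, ENNReal.ofReal (f (ω, x))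
      _ ≤ ∫⁻ _ in Ioc (0 : ℝ) 1, ENNReal.ofReal M :=
        lintegral_mono fun x => ENNReal.ofReal_le_ofReal (hfM _)
      _ = ENNReal.ofReal M := by rw [lintegral_const, measure_univ, mul_one]

lemma half_le_of_mem_massCone (hM : 0 ≤ M) (hf : f ∈ massCone A B M) (ω : S1) :
    f (ω, 1 / 2) / 2 ≤ M := by
  have hmass : ENNReal.ofReal (f (ω, 1 / 2)) * ENNReal.ofReal (1 / 2) ≤ ENNReal.ofReal M :=
    calc ENNReal.ofReal (f (ω, 1 / 2)) * ENNReal.ofReal (1 / 2)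
      _ = ∫⁻ _ in Ioc (0 : ℝ) (1 / 2), ENNReal.ofReal (f (ω, 1 / 2)) := by
        rw [setLIntegral_const, Real.volume_Ioc, sub_zero]
      _ ≤ ∫⁻ x in Ioc (0 : ℝ) (1 / 2), ENNReal.ofReal (f (ω, x)) :=
        setLIntegral_mono' measurableSet_Ioc fun x hx => ENNReal.ofReal_le_ofReal <|
          (hf.1.1.fibre ω).antitoneOn ⟨hx.1, hx.2.trans (by norm_num)⟩ (by norm_num) hx.2
      _ ≤ ∫⁻ x in Ioc (0 : ℝ) 1, ENNReal.ofReal (f (ω, x)) :=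
        lintegral_mono_set (Ioc_subset_Ioc_right (by norm_num))
      _ ≤ ENNReal.ofReal M := hf.2 ω
  rw [← ENNReal.ofReal_mul (hf.1.1.nonneg _), ENNReal.ofReal_le_ofReal_iff hM] at hmass
  linarith

lemma baseTransfer_le [NeZero n] {z : S1 × ℝ} {r : ℝ} (h : ∀ ω, f (ω, z.2) ≤ r) :
    baseTransfer n f z ≤ r := by
  rw [baseTransfer_apply, div_le_iff₀ (Nat.cast_pos.2 (NeZero.pos n))]
  calc ∑ k ∈ Finset.range n, f (circleRoot n k z.1, z.2) ≤ ∑ _ ∈ Finset.range n, r :=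
        Finset.sum_le_sum fun k _ => h _
    _ = r * n := by rw [Finset.sum_const, Finset.card_range, nsmul_eq_mul, mul_comm]

lemma lintegral_baseTransfer_le [NeZero n] (hf : Measurable f) (hf0 : ∀ z, 0 ≤ f z) {q : ℝ≥0∞}
    (h : ∀ ω, ∫⁻ x in Ioc 0 1, ENNReal.ofReal (f (ω, x)) ≤ q) (ω : S1) :
    ∫⁻ x in Ioc 0 1, ENNReal.ofReal (baseTransfer n f (ω, x)) ≤ q := by
  have hn : (n : ℝ≥0∞) ≠ 0 := NeZero.ne _
  have hpoint (x : ℝ) : ENNReal.ofReal (baseTransfer n f (ω, x)) =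
      (∑ k ∈ Finset.range n, ENNReal.ofReal (f (circleRoot n k ω, x))) / n := by
    rw [baseTransfer_apply, ENNReal.ofReal_div_of_pos (Nat.cast_pos.2 (NeZero.pos n)),
      ENNReal.ofReal_natCast, ENNReal.ofReal_sum_of_nonneg fun k _ => hf0 _]
  simp only [hpoint, div_eq_mul_inv]
  rw [lintegral_mul_const' _ _ (ENNReal.inv_ne_top.2 hn), ← div_eq_mul_inv,
    lintegral_finsetSum _ fun k _ => by fun_prop]
  refine ENNReal.div_le_of_le_mul ?_
  calc ∑ k ∈ Finset.range n, ∫⁻ x in Ioc 0 1, ENNReal.ofReal (f (circleRoot n k ω, x))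
    _ ≤ ∑ _ ∈ Finset.range n, q := Finset.sum_le_sum fun k _ => h _
    _ = q * n := by rw [Finset.sum_const, Finset.card_range, nsmul_eq_mul, mul_comm]

lemma mapsTo_transfer_massCone (H : ConeParameters α c A B) (hM : 0 ≤ M) :
    MapsTo (transfer α) (massCone A B M) (massCone A B M) := by
  intro f hf
  have hcone := hf.1.1
  have hA : 0 < 1 - A := sub_pos.2 H.upper_lt_one
  have hα (ω : S1) : 0 ≤ α ω := (H.map_pos ω).le
  refine ⟨⟨hcone.transfer H, fun z hz => baseTransfer_le fun ω => ?_⟩, ?_⟩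
  · rw [fibreTransfer_of_mem (z := (ω, z.2)) (mem_strip.2 hz.2)]
    exact (hcone.fibre ω).lsvTransfer_le_mul_rpow_neg (H.map_pos ω) (H.le_upper ω)
      H.upper_lt_one.le (by positivity) ((half_le_of_mem_massCone hM hf ω).trans_eq (by field_simp))
      (fun y hy => hf.1.2 (ω, y) (mem_strip.2 hy)) hz.2
  · have hfibre := hcone.fibreTransfer H
    refine lintegral_baseTransfer_le (hfibre.measurable H.upper_pos.le
      (mul_nonneg two_pos.le H.nonneg)) hfibre.nonneg fun ω => ?_
    have hmassω := lintegral_fibreTransfer_mul hα (hcone.measurable H.upper_pos.le H.nonneg)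
      hcone.nonneg measurable_one ω
    simp only [Pi.one_apply, mul_one] at hmassω
    exact hmassω.trans_le (hf.2 ω)

lemma densityMeasure_transfer_apply (H : ConeParameters α c A B) (hf : InDensityCone A B f)
    {E : Set (S1 × ℝ)} (hE : MeasurableSet E) (hinv : Tskew α ⁻¹' E = E) :
    densityMeasure (transfer α f) E = densityMeasure f E := by
  rw [← map_Tskew_densityMeasure H hf, Measure.map_apply (measurable_Tskew H.measurable) hE, hinv]

lemma transfer_birkhoffAverage_apply (f : S1 × ℝ → ℝ) (z : S1 × ℝ) :
    transfer α (birkhoffAverage ℝ (transfer α) id n f) z =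
      birkhoffAverage ℝ (transfer α) (fun g => g z) n (transfer α f) := by
  rw [map_birkhoffAverage ℝ ℝ]
  simp only [birkhoffAverage, birkhoffSum, Function.comp_apply, id, Pi.smul_apply,
    Finset.sum_apply, ← Function.iterate_succ_apply, ← Function.iterate_succ_apply']

lemma birkhoffAverage_id_apply (T : (S1 × ℝ → ℝ) → S1 × ℝ → ℝ) (f : S1 × ℝ → ℝ) (z : S1 × ℝ) :
    birkhoffAverage ℝ T id n f z = birkhoffAverage ℝ T (fun g => g z) n f := by
  simp only [birkhoffAverage, birkhoffSum, id, Pi.smul_apply, Finset.sum_apply]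

lemma transfer_eq_self_of_tendsto_birkhoffAverage
    (hf : ∀ n, (transfer α)^[n] f ∈ boundedCone A B D) {φ : ℕ → ℕ} (hφ : Tendsto φ atTop atTop)
    (hlim : Tendsto (fun n => birkhoffAverage ℝ (transfer α) id (φ n) f) atTop (𝓝 g)) :
    transfer α g = g := by
  funext z
  have hbdd : Bornology.IsBounded (range fun n => (transfer α)^[n] f z) := by
    refine (Metric.isBounded_Icc 0 |D * z.2 ^ (-A)|).subset (range_subset_iff.2 fun n => ?_)
    exact mem_Icc_of_mem_boundedCone (hf n) z
  have hdiff := (tendsto_birkhoffAverage_apply_sub_birkhoffAverage ℝ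
    (g := fun g : S1 × ℝ → ℝ => g z) hbdd).comp hφ
  have hT := tendsto_pi_nhds.1 (((continuous_transfer (α := α)).tendsto g).comp hlim) z
  refine sub_eq_zero.1 (tendsto_nhds_unique (hT.sub (tendsto_pi_nhds.1 hlim z)) ?_)
  simpa only [Function.comp_def, transfer_birkhoffAverage_apply, birkhoffAverage_id_apply]
    using hdiff

lemma exists_transfer_eq_self (H : ConeParameters α c A B) (hf : InDensityCone A B f)
    (hM : 0 ≤ M) (hfM : ∀ z, f z ≤ M) :
    ∃ g, InDensityCone A B g ∧ transfer α g = g ∧ ∀ E, MeasurableSet E → Tskew α ⁻¹' E = E →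
      densityMeasure g E = densityMeasure f E := by
  have hA0 := H.upper_pos.le
  have hA := H.upper_lt_one
  have hmem (n : ℕ) : (transfer α)^[n] f ∈ massCone A B M :=
    (mapsTo_transfer_massCone H hM).iterate n (mem_massCone_of_le hf hA0 hA hM hfM)
  have hiter {E : Set (S1 × ℝ)} (hE : MeasurableSet E) (hinv : Tskew α ⁻¹' E = E) (n : ℕ) :
      densityMeasure ((transfer α)^[n] f) E = densityMeasure f E := by
    induction n with
    | zero => rfl
    | succ n ih =>
      rw [Function.iterate_succ_apply', densityMeasure_transfer_apply H (hmem n).1.1 hE hinv, ih]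
  have havg {E : Set (S1 × ℝ)} (hE : MeasurableSet E) (hinv : Tskew α ⁻¹' E = E) (n : ℕ) :
      birkhoffAverage ℝ (transfer α) id (n + 1) f ∈
        {g | g ∈ boundedCone A B (3 * M / (1 - A)) ∧ densityMeasure g E = densityMeasure f E} := by
    rw [birkhoffAverage, birkhoffSum, Finset.smul_sum]
    refine (convex_setOf_densityMeasure_eq hA0 H.nonneg E _).sum_mem (fun _ _ => by positivity)
      ?_ fun k _ => ⟨(hmem k).1, hiter hE hinv k⟩
    rw [Finset.sum_const, Finset.card_range, nsmul_eq_mul, mul_inv_cancel₀ (by positivity)]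
  obtain ⟨g, hg, φ, hφ, hlim⟩ := exists_subseq_tendsto_boundedCone hA0 H.nonneg
    fun n => (havg MeasurableSet.univ preimage_univ n).1
  refine ⟨g, hg.1, ?_, fun E hE hinv => ?_⟩
  · exact transfer_eq_self_of_tendsto_birkhoffAverage (fun n => (hmem n).1)
      (tendsto_add_atTop_nat 1 |>.comp hφ.tendsto_atTop) (tendsto_pi_nhds.2 hlim)
  · have hconv := tendsto_densityMeasure_of_mem_boundedCone hA0 hA H.nonneg
      (fun n => (havg hE hinv (φ n)).1) hlim hE
    simp only [(havg hE hinv _).2] at hconv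
    exact tendsto_nhds_unique hconv tendsto_const_nhds

end Existence

section Uniqueness

variable {α : S1 → ℝ} {c A B s u x : ℝ} {n : ℕ} {f g : S1 × ℝ → ℝ} {z : S1 × ℝ}

lemma mapsTo_Tskew_strip (hα : ∀ ω, 0 ≤ α ω) : MapsTo (Tskew α) strip strip := fun _ hz =>
  mem_strip.2 (mapsTo_Ta (hα _) (mem_strip.1 hz))

lemma eq_zero_of_lsvTransfer_Ta_eq_zero {a : ℝ} {φ : ℝ → ℝ} (ha : 0 ≤ a)
    (hφ : ∀ y, 0 ≤ φ y) (hx : x ∈ Ioc (0 : ℝ) 1) (h : lsvTransfer a φ (Ta a x) = 0) :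
    φ x = 0 := by
  have hD := leftBranchDeriv_pos ha (leftInverse_mem ha (mapsTo_Ta ha hx)).1.le
  obtain ⟨hleft, hright⟩ :=
    (add_eq_zero_iff_of_nonneg (div_nonneg (hφ _) hD.le) (div_nonneg (hφ _) two_pos.le)).1 h
  rcases le_or_gt x (1 / 2) with hle | hgt
  · rw [div_eq_zero_iff, or_iff_left hD.ne', Ta_of_le_half hle,
      leftInverse_leftBranch ha ⟨hx.1, hle⟩] at hleft
    exact hleft
  · have hxx : (Ta a x + 1) / 2 = x := by
      rw [Ta_of_half_lt hgt]
      ring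
    rw [div_eq_zero_iff, or_iff_left two_ne_zero, hxx] at hright
    exact hright

lemma eq_zero_of_baseTransfer_nsmul_eq_zero [NeZero n] (hf : ∀ z, 0 ≤ f z) {ω : S1}
    (h : baseTransfer n f (n • ω, x) = 0) : f (ω, x) = 0 := by
  rw [baseTransfer_apply, div_eq_zero_iff, or_iff_left (NeZero.ne _),
    sum_circleRoot_nsmul fun ξ => f (ξ, x),
    Finset.sum_eq_zero_iff_of_nonneg fun k _ => hf _] at h
  simpa only [Nat.cast_zero, zero_div, AddCircle.coe_zero, add_zero] using
    h 0 (Finset.mem_range.2 (NeZero.pos n))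

lemma eq_zero_of_transfer_Tskew_eq_zero (hα : ∀ ω, 0 ≤ α ω) (hf : ∀ z, 0 ≤ f z)
    (hz : z ∈ strip) (h : transfer α f (Tskew α z) = 0) : f z = 0 := by
  have hfibre0 (w : S1 × ℝ) : 0 ≤ fibreTransfer α f w := by
    have hmono : fibreTransfer α 0 w ≤ fibreTransfer α f w := monotone_fibreTransfer hα hf w
    rwa [map_zero, Pi.zero_apply] at hmono
  have hfibre : fibreTransfer α f (z.1, Ta (α z.1) z.2) = 0 :=
    eq_zero_of_baseTransfer_nsmul_eq_zero (n := 4) hfibre0 h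
  have hmem : (z.1, Ta (α z.1) z.2) ∈ strip := mapsTo_Tskew_strip hα hz
  rw [fibreTransfer_of_mem hmem] at hfibre
  exact eq_zero_of_lsvTransfer_Ta_eq_zero (hα _) (fun y => hf (z.1, y)) (mem_strip.1 hz) hfibre

lemma eq_zero_of_iterate_Tskew (hα : ∀ ω, 0 ≤ α ω) (hf : ∀ z, 0 ≤ f z)
    (hfix : transfer α f = f) (hz : z ∈ strip) (h : f ((Tskew α)^[n] z) = 0) : f z = 0 := by
  induction n generalizing z with
  | zero => exact h
  | succ n ih =>
    refine eq_zero_of_transfer_Tskew_eq_zero hα hf hz ?_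
    rw [hfix]
    exact ih (mapsTo_Tskew_strip hα hz) h

/-- Every point of `strip` has, in each fibre lying above it under the `n`-th iterate of the base
map, preimages under the `n`-th iterate of the skew product that are `s`-dense. -/
def FibrePreimagesDense (α : S1 → ℝ) (n : ℕ) (s : ℝ) : Prop :=
  ∀ ω, ∀ x ∈ Ioc (0 : ℝ) 1, ∀ p ∈ Ioc (0 : ℝ) 1,
    ∃ y ∈ Ioc (0 : ℝ) 1, (Tskew α)^[n] (ω, y) = (4 ^ n • ω, x) ∧ |y - p| < s

namespace FibrePreimagesDense

lemma mono (h : FibrePreimagesDense α n s) (hsu : s ≤ u) : FibrePreimagesDense α n u := by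
  intro ω x hx p hp
  obtain ⟨y, hy, hyx, hyp⟩ := h ω x hx p hp
  exact ⟨y, hy, hyx, hyp.trans_le hsu⟩

lemma zero (hs : 1 ≤ s) : FibrePreimagesDense α 0 s := by
  intro ω x hx p hp
  refine ⟨x, hx, by rw [pow_zero, one_smul, Function.iterate_zero_apply], abs_sub_lt_iff.2 ?_⟩
  constructor <;> linarith [hx.1, hx.2, hp.1, hp.2]

lemma succ (h : FibrePreimagesDense α n (leftBranch A s)) (h0 : ∀ ω, 0 < α ω)
    (hA : ∀ ω, α ω ≤ A) (hs : 0 < s) : FibrePreimagesDense α (n + 1) s := by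
  intro ω x hx p hp
  obtain ⟨q, hq, hqx, hqp⟩ := h (4 • ω) x hx (Ta (α ω) p) (mapsTo_Ta (h0 ω).le hp)
  obtain ⟨y, hy, hyq, hyp⟩ := exists_Ta_eq_abs_sub_lt (h0 ω) (hA ω) hs hq hp hqp
  refine ⟨y, hy, ?_, hyp⟩
  calc (Tskew α)^[n + 1] (ω, y) = (Tskew α)^[n] (4 • ω, Ta (α ω) y) := rfl
    _ = (4 ^ n • 4 • ω, x) := by rw [hyq, hqx]
    _ = (4 ^ (n + 1) • ω, x) := by rw [smul_smul, pow_succ]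

lemma of_one_le (h0 : ∀ ω, 0 < α ω) (hA : ∀ ω, α ω ≤ A) (hs : 0 < s) (hsu : s ≤ u)
    (hn : 1 ≤ u * (1 + (2 * s) ^ A) ^ n) : FibrePreimagesDense α n u := by
  induction n generalizing u with
  | zero => exact zero (by rwa [pow_zero, mul_one] at hn)
  | succ n ih =>
    have hu : 0 < u := hs.trans_le hsu
    have hA0 : 0 ≤ A := (h0 0).le.trans (hA 0)
    have hgrow : u * (1 + (2 * s) ^ A) ≤ leftBranch A u := by
      rw [leftBranch]
      gcongr
    refine succ ?_ h0 hA hu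
    refine mono (ih ?_ ?_) hgrow
    · exact hsu.trans (le_mul_of_one_le_right hu.le (le_add_of_nonneg_right (by positivity)))
    · rwa [mul_assoc, ← pow_succ']

lemma exists_forall_ge (h0 : ∀ ω, 0 < α ω) (hA : ∀ ω, α ω ≤ A) (hs : 0 < s) :
    ∃ N, ∀ n ≥ N, FibrePreimagesDense α n s := by
  have hδ : 1 < 1 + (2 * s) ^ A := lt_add_of_pos_right _ (by positivity)
  obtain ⟨N, hN⟩ := pow_unbounded_of_one_lt (1 / s) hδ
  rw [div_lt_iff₀' hs] at hN
  refine ⟨N, fun n hn => of_one_le h0 hA hs le_rfl (hN.le.trans ?_)⟩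
  gcongr
  exact hδ.le

end FibrePreimagesDense

lemma strip_subset_closure_preimages (h0 : ∀ ω, 0 < α ω) (hA : ∀ ω, α ω ≤ A) (hz : z ∈ strip) :
    strip ⊆ closure {w ∈ strip | ∃ n, (Tskew α)^[n] w = z} := by
  rintro ⟨η, p⟩ hp
  refine Metric.mem_closure_iff.2 fun ε hε => ?_
  obtain ⟨N, hN⟩ := FibrePreimagesDense.exists_forall_ge h0 hA hε
  obtain ⟨K, hK⟩ := pow_unbounded_of_one_lt (1 / ε) (show (1 : ℝ) < 4 by norm_num)
  set n := max N K
  obtain ⟨ξ, hξ, hξη⟩ := exists_nsmul_eq_dist_le (n := 4 ^ n) z.1 η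
  obtain ⟨y, hy, hyz, hyp⟩ := hN n (le_max_left N K) ξ z.2 (mem_strip.1 hz) p (mem_strip.1 hp)
  refine ⟨(ξ, y), ⟨mem_strip.2 hy, n, by rw [hyz, hξ]⟩, ?_⟩
  rw [Prod.dist_eq, dist_comm η, dist_comm p, Real.dist_eq]
  refine max_lt (hξη.trans_lt ?_) hyp
  have hn : (1 / ε : ℝ) < 4 ^ n :=
    hK.trans_le (pow_le_pow_right₀ (by norm_num) (le_max_right N K))
  rw [Nat.cast_pow, Nat.cast_ofNat, div_lt_iff₀ (by positivity)]
  exact (dist_circle_le_one _ _).trans_lt (by rwa [div_lt_iff₀' hε] at hn)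

lemma eqOn_zero_of_transfer_eq_self (h0 : ∀ ω, 0 < α ω) (hA : ∀ ω, α ω ≤ A)
    (hf : ∀ z, 0 ≤ f z) (hfc : ContinuousOn f strip) (hfix : transfer α f = f) (hz : z ∈ strip)
    (hfz : f z = 0) : EqOn f 0 strip := by
  have hzero : EqOn f 0 {w ∈ strip | ∃ n, (Tskew α)^[n] w = z} := by
    rintro w ⟨hw, n, hn⟩
    exact eq_zero_of_iterate_Tskew (fun ω => (h0 ω).le) hf hfix hw (by rw [hn, hfz])
  exact hzero.of_subset_closure hfc continuousOn_const (sep_subset _ _)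
    (strip_subset_closure_preimages h0 hA hz)

lemma Leb_eq_restrict_strip :
    Leb = ((volume : Measure S1).prod (volume : Measure ℝ)).restrict strip := by
  rw [Leb_eq_prod_Ioc, strip, ← Measure.prod_restrict, Measure.restrict_univ]

namespace InDensityCone

lemma eq_of_eqOn (hf : InDensityCone A B f) (hg : InDensityCone A B g) (h : EqOn f g strip) :
    f = g := by
  funext z
  by_cases hz : z ∈ strip
  · exact h hz
  · rw [hf.eq_zero z hz, hg.eq_zero z hz]

lemma eq_of_ae_eq (hf : InDensityCone A B f) (hg : InDensityCone A B g) (hA : 0 ≤ A) (hB : 0 ≤ B)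
    (h : f =ᵐ[Leb] g) : f = g := by
  have hstrip : strip ⊆ closure (interior strip) := by
    rw [strip, interior_prod_eq, closure_prod_eq, interior_univ, closure_univ, interior_Ioc,
      closure_Ioo zero_ne_one]
    exact prod_mono_right Ioc_subset_Icc_self
  rw [Leb_eq_restrict_strip] at h
  exact hf.eq_of_eqOn hg
    (Measure.eqOn_of_ae_eq h (hf.continuousOn hA hB) (hg.continuousOn hA hB) hstrip)

lemma eq_of_le_of_densityMeasure_le (hf : InDensityCone A B f) (hg : InDensityCone A B g)
    (hA : 0 ≤ A) (hB : 0 ≤ B) (hfg : f ≤ g) (hfin : densityMeasure f univ ≠ ⊤)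
    (hmass : densityMeasure g univ ≤ densityMeasure f univ) : f = g := by
  simp only [densityMeasure, withDensity_apply _ MeasurableSet.univ, Measure.restrict_univ]
    at hfin hmass
  refine hf.eq_of_ae_eq hg hA hB ?_
  filter_upwards [ae_eq_of_ae_le_of_lintegral_le
    (.of_forall fun z => ENNReal.ofReal_le_ofReal (hfg z)) hfin
    (hg.measurable hA hB).ennreal_ofReal.aemeasurable hmass] with z hz
  rwa [ENNReal.ofReal_eq_ofReal_iff (hf.nonneg z) (hg.nonneg z)] at hz

lemma eq_of_le_of_apply_eq (hf : InDensityCone A B f) (hg : InDensityCone A B g)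
    (H : ConeParameters α c A B) (hfix : transfer α f = f) (hgix : transfer α g = g)
    (hfg : f ≤ g) (hz : z ∈ strip) (h : f z = g z) : f = g := by
  have hA := H.upper_pos.le
  have hzero : EqOn (g - f) 0 strip :=
    eqOn_zero_of_transfer_eq_self H.map_pos H.le_upper (fun w => sub_nonneg.2 (hfg w))
      ((hg.continuousOn hA H.nonneg).sub (hf.continuousOn hA H.nonneg))
      (by rw [map_sub, hfix, hgix]) hz (sub_eq_zero.2 h.symm)
  exact hf.eq_of_eqOn hg fun w hw => (sub_eq_zero.1 (hzero hw)).symm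

lemma pos_of_transfer_eq_self (hf : InDensityCone A B f) (H : ConeParameters α c A B)
    (hfix : transfer α f = f) (hne : f ≠ 0) (hz : z ∈ strip) : 0 < f z := by
  refine (hf.nonneg z).lt_of_ne' fun hfz => hne ?_
  exact (zero.eq_of_le_of_apply_eq hf H (map_zero _) hfix hf.nonneg hz hfz.symm).symm

lemma transfer_inf_eq_self (hf : InDensityCone A B f) (hg : InDensityCone A B g)
    (H : ConeParameters α c A B) (hfix : transfer α f = f) (hgix : transfer α g = g)
    (hfin : densityMeasure f univ ≠ ⊤) : transfer α (f ⊓ g) = f ⊓ g := by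
  have hα (ω : S1) : 0 ≤ α ω := (H.map_pos ω).le
  have hw := hf.inf hg
  have hle : transfer α (f ⊓ g) ≤ f ⊓ g :=
    le_inf ((monotone_transfer hα inf_le_left).trans_eq hfix)
      ((monotone_transfer hα inf_le_right).trans_eq hgix)
  have hmass := densityMeasure_transfer_apply H hw .univ preimage_univ
  refine (hw.transfer H).eq_of_le_of_densityMeasure_le hw H.upper_pos.le H.nonneg hle ?_ hmass.ge
  rw [hmass]
  refine ne_top_of_le_ne_top hfin (withDensity_mono (.of_forall fun z => ?_) univ)
  exact ENNReal.ofReal_le_ofReal (inf_le_left (a := f) (b := g) z)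

lemma exists_eq_smul (hf : InDensityCone A B f) (hg : InDensityCone A B g)
    (H : ConeParameters α c A B) (hfix : transfer α f = f) (hgix : transfer α g = g) (hne : g ≠ 0)
    (hfin : densityMeasure f univ ≠ ⊤) : ∃ t : ℝ, 0 ≤ t ∧ f = t • g := by
  have hz : ((0 : S1), (1 : ℝ)) ∈ strip := mem_strip.2 ⟨one_pos, le_rfl⟩
  have hgz := hg.pos_of_transfer_eq_self H hgix hne hz
  set t := f (0, 1) / g (0, 1)
  have ht : 0 ≤ t := div_nonneg (hf.nonneg _) hgz.le
  have htg := hg.smul ht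
  have htgfix : transfer α (t • g) = t • g := by rw [map_smul, hgix]
  have heq : f (0, 1) = (t • g) (0, 1) := (div_mul_cancel₀ _ hgz.ne').symm
  have hinf := hf.transfer_inf_eq_self htg H hfix htgfix hfin
  have hw := hf.inf htg
  refine ⟨t, ht, (?_ : f ⊓ t • g = f).symm.trans ?_⟩
  · exact hw.eq_of_le_of_apply_eq hf H hinf hfix inf_le_left hz (min_eq_left heq.le)
  · exact hw.eq_of_le_of_apply_eq htg H hinf htgfix inf_le_right hz (min_eq_right heq.ge)

end InDensityCone

end Uniqueness

section Ergodicity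

variable {α : S1 → ℝ} {c A B M : ℝ} {K : ℝ≥0} {f h : S1 × ℝ → ℝ} {g : S1 × ℝ → ℝ≥0}
  {E : Set (S1 × ℝ)}

/-- A Lipschitz function made into a density: adding `K * (3 - x)` turns a nonnegative
`K`-Lipschitz function `g` into a member of the cone. -/
def testDensity (K : ℝ≥0) (g : S1 × ℝ → ℝ≥0) : S1 × ℝ → ℝ :=
  strip.indicator fun z => K * (3 - z.2) + g z

lemma inFibreCone_mul_three_sub_add (hA : 0 ≤ A) {φ : ℝ → ℝ≥0} (hφ : LipschitzWith K φ) :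
    InFibreCone A fun x => K * (3 - x) + φ x := by
  have hK := K.coe_nonneg
  have hlip {x y : ℝ} (hxy : x ≤ y) : |(φ x : ℝ) - φ y| ≤ K * (y - x) := by
    have := hφ.dist_le_mul x y
    rwa [NNReal.dist_eq, dist_comm, Real.dist_eq, abs_of_nonneg (sub_nonneg.2 hxy)] at this
  have hmono : MonotoneOn (fun x => x * (K * (3 - x) + φ x)) (Ioc 0 1) := by
    intro x hx y hy hxy
    have h1 : 0 ≤ (y - x) * φ x := mul_nonneg (sub_nonneg.2 hxy) (φ x).coe_nonneg
    have h2 : y * (φ x - φ y) ≤ y * (K * (y - x)) :=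
      mul_le_mul_of_nonneg_left (abs_le.1 (hlip hxy)).2 hy.1.le
    have h3 : 0 ≤ K * (y - x) * (3 - x - 2 * y) :=
      mul_nonneg (mul_nonneg hK (sub_nonneg.2 hxy)) (by linarith [hx.2, hy.2])
    change x * (K * (3 - x) + φ x) ≤ y * (K * (3 - y) + φ y)
    linarith
  have hnonneg {x : ℝ} (hx : x ∈ Ioc (0 : ℝ) 1) : 0 ≤ K * (3 - x) + φ x :=
    add_nonneg (mul_nonneg hK (by linarith [hx.2])) (φ x).coe_nonneg
  refine ⟨fun x hx => hnonneg hx, fun x _ y _ hxy => ?_, ?_⟩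
  · linarith [(abs_le.1 (hlip hxy)).1]
  · have hpow : MonotoneOn (fun x : ℝ => x ^ A) (Ioc 0 1) := fun x hx y _ hxy =>
      rpow_le_rpow hx.1.le hxy hA
    refine (hpow.mul hmono (fun x hx => rpow_nonneg hx.1.le A)
      fun x hx => mul_nonneg hx.1.le (hnonneg hx)).congr fun x hx => ?_
    simp only [Pi.mul_apply]
    rw [rpow_add hx.1, rpow_one]
    ring

lemma inDensityCone_testDensity (hA : 0 ≤ A) (hB : 1 ≤ B) (hg : LipschitzWith K g) :
    InDensityCone A B (testDensity K g) where
  eq_zero _ hz := indicator_of_notMem hz _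
  fibre ω := by
    have hgω : LipschitzWith K fun x => g (ω, x) := by
      simpa only [mul_one] using! hg.comp (LipschitzWith.prodMk_left ω)
    refine (inFibreCone_mul_three_sub_add hA hgω).congr fun x hx => ?_
    have hmem : (ω, x) ∈ strip := mem_strip.2 hx
    rw [testDensity, indicator_of_mem hmem]
  le_exp_mul ω η x := by
    by_cases hx : x ∈ Ioc (0 : ℝ) 1
    swap
    · have hnotMem (ξ : S1) : (ξ, x) ∉ strip := fun h => hx (mem_strip.1 h)
      rw [testDensity, indicator_of_notMem (hnotMem ω), indicator_of_notMem (hnotMem η), mul_zero]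
    have hlip : (g (ω, x) : ℝ) ≤ g (η, x) + K * dist ω η := by
      have hgx := (hg.comp (LipschitzWith.prodMk_right x)).dist_le_mul ω η
      rw [mul_one, NNReal.dist_eq, Function.comp_apply, Function.comp_apply] at hgx
      linarith [(abs_le.1 hgx).2]
    have hexp : 1 + dist ω η ≤ exp (B * dist ω η) := by
      refine le_trans ?_ (add_one_le_exp _)
      rw [add_comm]
      gcongr
      exact le_mul_of_one_le_left dist_nonneg hB
    have hK : (K : ℝ) ≤ K * (3 - x) + g (η, x) :=
      (le_mul_of_one_le_right K.coe_nonneg (by linarith [hx.2])).trans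
        (le_add_of_nonneg_right (g (η, x)).coe_nonneg)
    have hmem (ξ : S1) : (ξ, x) ∈ strip := mem_strip.2 hx
    rw [testDensity, indicator_of_mem (hmem ω), indicator_of_mem (hmem η)]
    calc K * (3 - x) + g (ω, x) ≤ K * (3 - x) + g (η, x) + dist ω η * K := by linarith
      _ ≤ K * (3 - x) + g (η, x) + dist ω η * (K * (3 - x) + g (η, x)) := by gcongr
      _ = (1 + dist ω η) * (K * (3 - x) + g (η, x)) := by ring
      _ ≤ exp (B * dist ω η) * (K * (3 - x) + g (η, x)) :=
        mul_le_mul_of_nonneg_right hexp (K.coe_nonneg.trans hK)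

lemma testDensity_le (hg : ∀ z, g z ≤ 1) (z : S1 × ℝ) : testDensity K g z ≤ 3 * K + 1 := by
  refine indicator_apply_le' (fun hz => ?_) fun _ => by positivity
  have h1 : (g z : ℝ) ≤ 1 := hg z
  have h2 : 0 ≤ K * z.2 := mul_nonneg K.coe_nonneg hz.2.1.le
  linarith

lemma densityMeasure_testDensity (hg : Measurable g) :
    densityMeasure (testDensity K g) =
      densityMeasure (testDensity K 0) + Leb.withDensity fun z => g z := by
  have hadd : (fun z => ENNReal.ofReal (testDensity K g z)) =ᵐ[Leb]
      (fun z => ENNReal.ofReal (testDensity K 0 z)) + fun z => (g z : ℝ≥0∞) := by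
    filter_upwards [ae_mem_strip] with z hz
    have h3 : 0 ≤ K * (3 - z.2) := mul_nonneg K.coe_nonneg (by linarith [hz.2.2])
    rw [Pi.add_apply, testDensity, testDensity, indicator_of_mem hz, indicator_of_mem hz,
      Pi.zero_apply, NNReal.coe_zero, add_zero, ENNReal.ofReal_add h3 (g z).coe_nonneg,
      ENNReal.ofReal_coe_nnreal]
  rw [densityMeasure, densityMeasure, withDensity_congr_ae hadd]
  exact withDensity_add_right _ hg.coe_nnreal_ennreal

lemma densityMeasure_univ_le (hf : ∀ z, f z ≤ M) : densityMeasure f univ ≤ ENNReal.ofReal M :=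
  calc densityMeasure f univ ≤ (Leb.withDensity fun _ => ENNReal.ofReal M) univ :=
        withDensity_mono (.of_forall fun z => ENNReal.ofReal_le_ofReal (hf z)) univ
    _ = ENNReal.ofReal M := by rw [withDensity_const, Measure.smul_apply, measure_univ, smul_eq_mul,
        mul_one]

lemma ne_zero_of_densityMeasure_univ_ne_zero (h : densityMeasure f univ ≠ 0) : f ≠ 0 := by
  rintro rfl
  simp [densityMeasure] at h

lemma densityMeasure_apply_eq_mul (H : ConeParameters α c A B) (hh : InDensityCone A B h)
    (hfix : transfer α h = h) (hmass : densityMeasure h univ = 1) (hf : InDensityCone A B f)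
    (hM : 0 ≤ M) (hfM : ∀ z, f z ≤ M) (hE : MeasurableSet E) (hinv : Tskew α ⁻¹' E = E) :
    densityMeasure f E = densityMeasure f univ * densityMeasure h E := by
  obtain ⟨k, hk, hkfix, hkf⟩ := exists_transfer_eq_self H hf hM hfM
  have hfin : densityMeasure k univ ≠ ⊤ := by
    rw [hkf univ .univ preimage_univ]
    exact ne_top_of_le_ne_top ENNReal.ofReal_ne_top (densityMeasure_univ_le hfM)
  have hne : h ≠ 0 := ne_zero_of_densityMeasure_univ_ne_zero (hmass ▸ one_ne_zero)
  obtain ⟨t, ht, rfl⟩ := hk.exists_eq_smul hh H hkfix hfix hne hfin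
  rw [← hkf E hE hinv, ← hkf univ .univ preimage_univ, densityMeasure_smul ht,
    Measure.smul_apply, Measure.smul_apply, hmass, smul_eq_mul, smul_eq_mul, mul_one]

lemma exists_transfer_eq_self_densityMeasure_eq_one (H : ConeParameters α c A B) :
    ∃ h, InDensityCone A B h ∧ transfer α h = h ∧ densityMeasure h univ = 1 := by
  have hcone := inDensityCone_testDensity H.upper_pos.le H.one_le
    (LipschitzWith.const (1 : ℝ≥0) : LipschitzWith 0 fun _ : S1 × ℝ => (1 : ℝ≥0))
  obtain ⟨h, hh, hfix, hmass⟩ := exists_transfer_eq_self H hcone (by positivity)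
    (testDensity_le fun _ => le_rfl)
  refine ⟨h, hh, hfix, (hmass univ .univ preimage_univ).trans ?_⟩
  rw [densityMeasure_testDensity measurable_const]
  simp [densityMeasure, testDensity]

lemma setLIntegral_eq_mul_of_lipschitzWith (H : ConeParameters α c A B)
    (hh : InDensityCone A B h) (hfix : transfer α h = h) (hmass : densityMeasure h univ = 1)
    (hE : MeasurableSet E) (hinv : Tskew α ⁻¹' E = E) (hg : LipschitzWith K g)
    (hg1 : ∀ z, g z ≤ 1) :
    ∫⁻ z in E, g z ∂Leb = densityMeasure h E * ∫⁻ z, g z ∂Leb := by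
  have hM : (0 : ℝ) ≤ 3 * K + 1 := by positivity
  have hA := H.upper_pos.le
  have hlip0 : LipschitzWith K (0 : S1 × ℝ → ℝ≥0) := LipschitzWith.const' 0
  have hle0 (z : S1 × ℝ) := testDensity_le (K := K) (g := 0) (fun _ => zero_le_one) z
  have hcone := inDensityCone_testDensity hA H.one_le hg
  have hcone0 := inDensityCone_testDensity hA H.one_le hlip0
  have heq := densityMeasure_apply_eq_mul H hh hfix hmass hcone hM (testDensity_le hg1) hE hinv
  have heq0 := densityMeasure_apply_eq_mul H hh hfix hmass hcone0 hM hle0 hE hinv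
  have hfin : densityMeasure (testDensity K 0) E ≠ ⊤ :=
    ne_top_of_le_ne_top ENNReal.ofReal_ne_top
      ((measure_mono (subset_univ E)).trans (densityMeasure_univ_le hle0))
  rw [densityMeasure_testDensity hg.continuous.measurable, Measure.add_apply, Measure.add_apply,
    add_mul, ← heq0, ENNReal.add_right_inj hfin, withDensity_apply _ hE,
    withDensity_apply _ .univ, Measure.restrict_univ] at heq
  rw [heq, mul_comm]

lemma ext_of_forall_lipschitzWith_lintegral_eq {Ω : Type*} [MeasurableSpace Ω]
    [PseudoEMetricSpace Ω] [BorelSpace Ω] {μ ν : Measure Ω} [IsFiniteMeasure μ]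
    [IsFiniteMeasure ν]
    (h : ∀ (K : ℝ≥0) (g : Ω → ℝ≥0), LipschitzWith K g → (∀ x, g x ≤ 1) →
      ∫⁻ x, g x ∂μ = ∫⁻ x, g x ∂ν) : μ = ν := by
  have hclosed (F : Set Ω) (hF : IsClosed F) : μ F = ν F := by
    have hpos (n : ℕ) : (0 : ℝ) < 1 / (n + 1) := Nat.one_div_pos_of_nat
    have hlim := tendsto_one_div_add_atTop_nhds_zero_nat (𝕜 := ℝ)
    refine tendsto_nhds_unique (tendsto_lintegral_thickenedIndicator_of_isClosed μ hF hpos hlim)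
      ((tendsto_lintegral_thickenedIndicator_of_isClosed ν hF hpos hlim).congr fun n => ?_)
    exact (h _ _ (lipschitzWith_thickenedIndicator (hpos n) F)
      (thickenedIndicator_le_one (hpos n) F)).symm
  exact ext_of_generate_finite _ (BorelSpace.measurable_eq.trans borel_eq_generateFrom_isClosed)
    isPiSystem_isClosed hclosed (hclosed univ isClosed_univ)

lemma Leb_eq_zero_or_compl_eq_zero (H : ConeParameters α c A B) (hE : MeasurableSet E)
    (hinv : Tskew α ⁻¹' E = E) : Leb E = 0 ∨ Leb Eᶜ = 0 := by
  obtain ⟨h, hh, hfix, hmass⟩ := exists_transfer_eq_self_densityMeasure_eq_one H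
  have hq : densityMeasure h E ≠ ⊤ :=
    ne_top_of_le_ne_top ENNReal.one_ne_top ((measure_mono (subset_univ E)).trans_eq hmass)
  have : IsFiniteMeasure (densityMeasure h E • Leb) := Measure.smul_finite _ hq
  have hrestrict : Leb.restrict E = densityMeasure h E • Leb :=
    ext_of_forall_lipschitzWith_lintegral_eq fun K g hg hg1 => by
      rw [setLIntegral_eq_mul_of_lipschitzWith H hh hfix hmass hE hinv hg hg1,
        lintegral_smul_measure, smul_eq_mul]
  have hEc : densityMeasure h E * Leb Eᶜ = 0 := by
    rw [← smul_eq_mul, ← Measure.smul_apply, ← hrestrict, Measure.restrict_apply hE.compl,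
      compl_inter_self, measure_empty]
  refine (mul_eq_zero.1 hEc).imp_left fun hE0 => ?_
  rw [← Measure.restrict_apply_self, hrestrict, hE0, zero_smul, Measure.coe_zero, Pi.zero_apply]

lemma ergodic_of_absolutelyContinuous (H : ConeParameters α c A B) {m : Measure (S1 × ℝ)}
    (hm : m ≪ Leb) (hinv : m.map (Tskew α) = m) : Ergodic (Tskew α) m where
  measurable := measurable_Tskew H.measurable
  map_eq := hinv
  aeconst_set E hE hEinv := by
    rw [eventuallyConst_set']
    exact (Leb_eq_zero_or_compl_eq_zero H hE hEinv).imp (fun h => ae_eq_empty.2 (hm h))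
      fun h => ae_eq_univ.2 (hm h)

lemma exists_density (H : ConeParameters α c A B) :
    ∃ h, InDensityCone A B h ∧ IsProbabilityMeasure (densityMeasure h) ∧
      (densityMeasure h).map (Tskew α) = densityMeasure h ∧ Leb ≪ densityMeasure h := by
  obtain ⟨h, hh, hfix, hmass⟩ := exists_transfer_eq_self_densityMeasure_eq_one H
  have hne : h ≠ 0 := ne_zero_of_densityMeasure_univ_ne_zero (hmass ▸ one_ne_zero)
  refine ⟨h, hh, ⟨hmass⟩, by rw [map_Tskew_densityMeasure H hh, hfix], ?_⟩
  refine withDensity_absolutelyContinuous'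
    (hh.measurable H.upper_pos.le H.nonneg).ennreal_ofReal.aemeasurable ?_
  filter_upwards [ae_mem_strip] with z hz
  exact (ENNReal.ofReal_pos.2 (hh.pos_of_transfer_eq_self H hfix hne hz)).ne'

end Ergodicity

lemma exists_lipschitzWith_of_contDiff_lift {F : Type*} [NormedAddCommGroup F] [NormedSpace ℝ F]
    {φ : S1 → F} {Φ : ℝ → F} (hΦ : ContDiff ℝ 1 Φ) (hlift : ∀ t : ℝ, φ t = Φ t) :
    ∃ Λ : ℝ≥0, LipschitzWith Λ φ := by
  have hper : Function.Periodic Φ 1 := fun t => by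
    rw [← hlift, ← hlift, AddCircle.coe_add_period]
  have hper' : Function.Periodic (deriv Φ) 1 := fun t => by
    rw [← deriv_comp_add_const, funext hper]
  obtain ⟨C, hC⟩ := (isCompact_Icc (a := (0 : ℝ)) (b := 1)).exists_bound_of_continuousOn
    (hΦ.continuous_deriv le_rfl).continuousOn
  have hbound (t : ℝ) : ‖deriv Φ t‖₊ ≤ C.toNNReal := by
    obtain ⟨y, hy, hty⟩ := hper'.exists_mem_Ico₀ one_pos t
    rw [hty]
    exact NNReal.coe_le_coe.1 ((hC y ⟨hy.1, hy.2.le⟩).trans (le_coe_toNNReal C))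
  have hlip := lipschitzWith_of_nnnorm_deriv_le (hΦ.differentiable one_ne_zero) hbound
  refine ⟨C.toNNReal, LipschitzWith.of_dist_le_mul fun ω η => ?_⟩
  obtain ⟨s, hs, hnorm⟩ := exists_coe_eq_abs_eq_norm (ω - η)
  induction η using QuotientAddGroup.induction_on with | H t =>
  obtain rfl : ((t + s : ℝ) : S1) = ω := by rw [AddCircle.coe_add, hs, add_sub_cancel]
  calc dist (φ (t + s : ℝ)) (φ t) = dist (Φ (t + s)) (Φ t) := by rw [hlift, hlift]
    _ ≤ C.toNNReal * dist (t + s) t := hlip.dist_le_mul _ _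
    _ = C.toNNReal * dist ((t + s : ℝ) : S1) t := by
      rw [Real.dist_eq, add_sub_cancel_left, hnorm, dist_eq_norm]

theorem stmt0_general {α : S1 → ℝ} {Λ : ℝ≥0} (hα : LipschitzWith Λ α) (h0 : ∀ ω, 0 < α ω)
    (h1 : ∀ ω, α ω < 1) :
    (∃! m : Measure (S1 × ℝ),
      IsProbabilityMeasure m ∧ m ≪ Leb ∧ m.map (Tskew α) = m) ∧
    ∀ m : Measure (S1 × ℝ),
      IsProbabilityMeasure m → m ≪ Leb → m.map (Tskew α) = m →
        Ergodic (Tskew α) m ∧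
        ∃ h : S1 × ℝ → ℝ,
          m = Leb.withDensity (fun z => ENNReal.ofReal (h z)) ∧
          ∀ K : Set (S1 × ℝ), IsCompact K → K ⊆ Set.univ ×ˢ Set.Ioc (0:ℝ) 1 →
            ∃ L : ℝ≥0, LipschitzOnWith L h K := by
  obtain ⟨c, A, B, H⟩ := ConeParameters.exists_of_lipschitzWith hα h0 h1
  obtain ⟨h, hh, hprob, hinv, hac⟩ := exists_density H
  have hLeb : densityMeasure h ≪ Leb := withDensity_absolutelyContinuous _ _
  have huniq (m : Measure (S1 × ℝ)) (hm : IsProbabilityMeasure m) (hmLeb : m ≪ Leb)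
      (hminv : m.map (Tskew α) = m) : m = densityMeasure h :=
    (ergodic_of_absolutelyContinuous H hLeb hinv).eq_of_absolutelyContinuous
      ⟨measurable_Tskew H.measurable, hminv⟩ (hmLeb.trans hac)
  refine ⟨⟨densityMeasure h, ⟨hprob, hLeb, hinv⟩, fun m hm => huniq m hm.1 hm.2.1 hm.2.2⟩,
    fun m hm hmLeb hminv => ⟨ergodic_of_absolutelyContinuous H hmLeb hminv, h,
      huniq m hm hmLeb hminv, fun K hK hKs => ?_⟩⟩
  exact hh.exists_lipschitzOnWith_of_isCompact H.upper_pos.le H.nonneg hK hKs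

end Development

/-- The skew product `T` admits a unique absolutely continuous invariant Borel probability
measure `m`; moreover `m` is ergodic and its density `h = dm/dLeb` has a version which is
Lipschitz on every compact subset of `S¹ × (0,1]`. -/
theorem stmt0
    (α : S1 → ℝ) (αl : ℝ → ℝ)
    (hαl : ContDiff ℝ 2 αl) (hlift : ∀ t : ℝ, α (t : S1) = αl t)
    (x₀ : S1) (t₀ : ℝ) (ht₀ : (t₀ : S1) = x₀)
    (αmin αmax : ℝ)
    (hmin : ∀ ω, αmin ≤ α ω) (hx₀ : α x₀ = αmin)
    (huniq : ∀ ω, α ω = αmin → ω = x₀)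
    (hmax : ∀ ω, α ω ≤ αmax) (hmax_att : ∃ ω, α ω = αmax)
    (h0 : 0 < αmin) (h01 : αmin < αmax) (h1 : αmax < 1) (h32 : αmax < 3 / 2 * αmin)
    (h2nd : 0 < iteratedDeriv 2 αl t₀)
 :
    (∃! m : Measure (S1 × ℝ),
      IsProbabilityMeasure m ∧ m ≪ Leb ∧ m.map (Tskew α) = m) ∧
    ∀ m : Measure (S1 × ℝ),
      IsProbabilityMeasure m → m ≪ Leb → m.map (Tskew α) = m →
        Ergodic (Tskew α) m ∧
        ∃ h : S1 × ℝ → ℝ,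
          m = Leb.withDensity (fun z => ENNReal.ofReal (h z)) ∧
          ∀ K : Set (S1 × ℝ), IsCompact K → K ⊆ Set.univ ×ˢ Set.Ioc (0:ℝ) 1 →
            ∃ L : ℝ≥0, LipschitzOnWith L h K := by
  obtain ⟨Λ, hΛ⟩ := exists_lipschitzWith_of_contDiff_lift (hαl.of_le one_le_two) hlift
  exact stmt0_general hΛ (fun ω => h0.trans_le (hmin ω)) fun ω => (hmax ω).trans_lt h1
end
end

section
/- For all integers m, m' ≥ 1 there exist C > 0 and δ ∈ (0,1) such that: for every N ∈ ℕ, all nondecreasing finite sequences of nonnegative integers k₁ ≤ … ≤ k_m and l₁ ≤ … ≤ l_{m'}, and all Lipschitz functions G₁, …, G_m, H₁, …, H_{m'} : S¹ → ℝ, one has |Cov(Π_{i=1}^{m} G_i ∘ F^{k_i}, Π_{j=1}^{m'} H_j ∘ F^{N+l_j})| ≤ C·(Π_{i=1}^{m} ‖G_i‖)·(Π_{j=1}^{m'} ‖H_j‖)·δ^{N − k_m}. -/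
open MeasureTheory Real Filter Topology
open scoped NNReal ENNReal

noncomputable section

/-- The Lipschitz norm of `g : S¹ → ℝ`: sup norm plus best Lipschitz constant. -/
noncomputable def lipNorm (g : S1 → ℝ) : ℝ :=
  (⨆ ω, |g ω|) + sInf {L : ℝ | 0 ≤ L ∧ LipschitzWith (Real.toNNReal L) g}

/-- Covariance of two integrable functions on `S¹` (with respect to Haar measure). -/
noncomputable def Cov (u v : S1 → ℝ) : ℝ :=
  (∫ ω : S1, u ω * v ω) - (∫ ω : S1, u ω) * (∫ ω : S1, v ω)

/-!
A function invariant under translation by `1 / M` is orthogonal to `u` minus its average over the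
rotations by `j / M`. If `u` is `L`-Lipschitz then so is this average, which is moreover invariant
under these rotations; as every point of the circle is within `1 / (2 M)` of some `j / M`, the
average stays within `L / (2 M)` of its mean `∫ u`. Apply this with `M = 4 ^ N`, the second product
being a function of `4 ^ N • ω`, and with `u` the first product, whose Lipschitz constant is of
order `4 ^ k_m`.
-/

open scoped BigOperators

lemma abs_sub_integral_le {α : Type*} [MeasurableSpace α] {μ : Measure α}
    [IsProbabilityMeasure μ] {f : α → ℝ} {C : ℝ} (hf : Integrable f μ)
    (hC : ∀ x y, |f x - f y| ≤ C) (x : α) : |f x - ∫ y, f y ∂μ| ≤ C := by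
  have h_mem : ∫ y, f y ∂μ ∈ Metric.closedBall (f x) C :=
    (convex_closedBall _ _).integral_mem Metric.isClosed_closedBall
      (Eventually.of_forall fun y => by simpa [Real.dist_eq] using hC y x) hf
  rwa [Metric.mem_closedBall', Real.dist_eq] at h_mem

section TranslateAverage

variable {A Γ : Type*} [AddGroup A] [AddGroup Γ] [Fintype Γ] (φ : Γ →+ A)

/-- The average of `u` over its translates by the image of a finite group `Γ` under `φ`. It
represents the conditional expectation of `u` given the functions invariant under these
translations. -/
def translateAverage (u : A → ℝ) (x : A) : ℝ := 𝔼 γ, u (x + φ γ)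

lemma translateAverage_add_map (u : A → ℝ) (x : A) (γ : Γ) :
    translateAverage φ u (x + φ γ) = translateAverage φ u x :=
  Fintype.expect_equiv (Equiv.addLeft γ) _ _ fun γ' => by simp [add_assoc]

variable [MeasurableSpace A] [MeasurableAdd A] {μ : Measure A} [μ.IsAddRightInvariant]

lemma integrable_translateAverage {u : A → ℝ} (hu : Integrable u μ) :
    Integrable (translateAverage φ u) μ := by
  unfold translateAverage
  simp only [Fintype.expect_eq_sum_div_card]
  exact (integrable_finsetSum _ fun γ _ => hu.comp_add_right (φ γ)).div_const _

lemma integral_translateAverage_mul {u v : A → ℝ} (hv : ∀ γ x, v (x + φ γ) = v x)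
    (huv : Integrable (fun x => u x * v x) μ) :
    ∫ x, translateAverage φ u x * v x ∂μ = ∫ x, u x * v x ∂μ := by
  have h_translate (γ : Γ) : (fun x => u (x + φ γ) * v x) = fun x => u (x + φ γ) * v (x + φ γ) := by
    simp only [hv]
  have h_integral (γ : Γ) : ∫ x, u (x + φ γ) * v x ∂μ = ∫ x, u x * v x ∂μ := by
    rw [h_translate, integral_add_right_eq_self (fun x => u x * v x)]
  have h_integrable (γ : Γ) : Integrable (fun x => u (x + φ γ) * v x) μ := by
    rw [h_translate]
    exact huv.comp_add_right (φ γ)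
  simp only [translateAverage, Finset.expect_mul]
  simp only [Fintype.expect_eq_sum_div_card]
  rw [integral_div, integral_finsetSum _ fun γ _ => h_integrable γ,
    ← Fintype.expect_eq_sum_div_card]
  simp only [h_integral, Fintype.expect_const]

lemma integral_translateAverage {u : A → ℝ} (hu : Integrable u μ) :
    ∫ x, translateAverage φ u x ∂μ = ∫ x, u x ∂μ := by
  simpa using integral_translateAverage_mul φ (v := fun _ => 1) (by simp) (by simpa using hu)

end TranslateAverage

section LipschitzAverage

variable {A Γ : Type*} [SeminormedAddCommGroup A] [AddGroup Γ] (φ : Γ →+ A)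

lemma abs_translateAverage_sub_le [Fintype Γ] {u : A → ℝ} {L : ℝ≥0} (hu : LipschitzWith L u)
    (x y : A) : |translateAverage φ u x - translateAverage φ u y| ≤ L * ‖x - y‖ := by
  rw [translateAverage, translateAverage, ← Finset.expect_sub_distrib]
  refine (Finset.abs_expect_le _ _).trans (Finset.expect_le Finset.univ_nonempty fun γ _ => ?_)
  simpa [Real.dist_eq, dist_eq_norm] using hu.dist_le_mul (x + φ γ) (y + φ γ)

lemma abs_translateAverage_sub_le_of_dense [Fintype Γ] {u : A → ℝ} {L : ℝ≥0}
    (hu : LipschitzWith L u) {r : ℝ} (hr : ∀ x, ∃ γ, ‖x - φ γ‖ ≤ r) (x y : A) :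
    |translateAverage φ u x - translateAverage φ u y| ≤ L * r := by
  obtain ⟨γ, hγ⟩ := hr (x - y)
  calc |translateAverage φ u x - translateAverage φ u y|
      = |translateAverage φ u x - translateAverage φ u (y + φ γ)| := by
        rw [translateAverage_add_map]
    _ ≤ L * ‖x - (y + φ γ)‖ := abs_translateAverage_sub_le φ hu _ _
    _ ≤ L * r := by rw [← sub_sub]; gcongr

lemma abs_integral_mul_sub_le_of_invariant [Finite Γ] [MeasurableSpace A] [MeasurableAdd A]
    {μ : Measure A} [μ.IsAddRightInvariant] [IsProbabilityMeasure μ] {u v : A → ℝ} {L : ℝ≥0}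
    {r B : ℝ} (hu : LipschitzWith L u) (hu_int : Integrable u μ)
    (hv_meas : AEStronglyMeasurable v μ)
    (hB : ∀ x, |v x| ≤ B) (hv : ∀ γ x, v (x + φ γ) = v x) (hr : ∀ x, ∃ γ, ‖x - φ γ‖ ≤ r) :
    |∫ x, u x * v x ∂μ - (∫ x, u x ∂μ) * ∫ x, v x ∂μ| ≤ L * r * B := by
  cases nonempty_fintype Γ
  set m := ∫ x, u x ∂μ with hm
  have h_avg_int : Integrable (translateAverage φ u) μ := integrable_translateAverage φ hu_int
  have h_close (x : A) : |translateAverage φ u x - m| ≤ L * r := by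
    rw [hm, ← integral_translateAverage φ hu_int]
    exact abs_sub_integral_le h_avg_int (abs_translateAverage_sub_le_of_dense φ hu hr) x
  have hv_bound : ∀ᵐ x ∂μ, ‖v x‖ ≤ B := Eventually.of_forall hB
  have h_eq : ∫ x, u x * v x ∂μ - m * ∫ x, v x ∂μ =
      ∫ x, (translateAverage φ u x - m) * v x ∂μ := by
    simp only [sub_mul]
    rw [integral_sub (h_avg_int.mul_bdd hv_meas hv_bound)
        ((Integrable.of_bound hv_meas B hv_bound).const_mul m), integral_const_mul,
      integral_translateAverage_mul φ hv (hu_int.mul_bdd hv_meas hv_bound)]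
  have h_bound (x : A) : ‖(translateAverage φ u x - m) * v x‖ ≤ L * r * B := by
    rw [norm_mul]
    exact mul_le_mul (h_close x) (hB x) (norm_nonneg _) ((abs_nonneg _).trans (h_close x))
  rw [h_eq]
  simpa using norm_integral_le_of_norm_le_const (μ := μ) (Eventually.of_forall h_bound)

end LipschitzAverage

section Circle

variable (M : ℕ) [NeZero M]

lemma exists_norm_sub_toAddCircle_le (x : UnitAddCircle) :
    ∃ j : ZMod M, ‖x - ZMod.toAddCircle j‖ ≤ (2 * M : ℝ)⁻¹ := by
  obtain ⟨t, rfl⟩ := QuotientAddGroup.mk_surjective x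
  have hM : (0 : ℝ) < M := Nat.cast_pos.mpr (NeZero.pos M)
  refine ⟨(round (t * M) : ℤ), ?_⟩
  rw [ZMod.toAddCircle_intCast]
  calc ‖((t - round (t * M) / M : ℝ) : UnitAddCircle)‖
      ≤ |t - round (t * M) / M| := QuotientAddGroup.norm_mk_le_norm
    _ = |t * M - round (t * M)| / M := by
      rw [← abs_of_pos hM, ← abs_div, abs_of_pos hM, sub_div, mul_div_cancel_right₀ _ hM.ne']
    _ ≤ 1 / 2 / M := by gcongr; exact abs_sub_round _
    _ = (2 * M : ℝ)⁻¹ := by rw [div_div, one_div]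

variable {M}

lemma nsmul_add_toAddCircle (x : UnitAddCircle) (j : ZMod M) :
    M • (x + ZMod.toAddCircle j) = M • x := by
  rw [smul_add, ← map_nsmul, nsmul_eq_mul, CharP.cast_eq_zero, zero_mul, map_zero, add_zero]

lemma abs_cov_comp_nsmul_le {u w : S1 → ℝ} {L : ℝ≥0} {B : ℝ} (hu : LipschitzWith L u)
    (hw : Measurable w) (hB : ∀ x, |w x| ≤ B) :
    |Cov u (fun ω => w (M • ω))| ≤ L * (2 * M : ℝ)⁻¹ * B := by
  have : IsProbabilityMeasure (volume : Measure S1) := ⟨UnitAddCircle.measure_univ⟩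
  exact abs_integral_mul_sub_le_of_invariant (ZMod.toAddCircle (N := M)) hu
    (hu.continuous.integrable_of_hasCompactSupport (HasCompactSupport.of_compactSpace u))
    (hw.comp (measurable_const_smul M)).aestronglyMeasurable (fun x => hB _)
    (fun j x => congrArg w (nsmul_add_toAddCircle x j)) (exists_norm_sub_toAddCircle_le M)

end Circle

section LipschitzProducts

variable {α ι : Type*} [PseudoMetricSpace α]

lemma abs_prod_le_prod {s : Finset ι} {a A : ι → ℝ} (h : ∀ i ∈ s, |a i| ≤ A i) :
    |∏ i ∈ s, a i| ≤ ∏ i ∈ s, A i := by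
  rw [Finset.abs_prod]
  exact Finset.prod_le_prod (fun _ _ => abs_nonneg _) h

lemma lipschitzWith_mul_of_bounded {f g : α → ℝ} {Kf Kg A B : ℝ≥0} (hf : LipschitzWith Kf f)
    (hg : LipschitzWith Kg g) (hA : ∀ x, |f x| ≤ A) (hB : ∀ x, |g x| ≤ B) :
    LipschitzWith (Kf * B + A * Kg) fun x => f x * g x := by
  refine LipschitzWith.of_dist_le_mul fun x y => ?_
  calc |f x * g x - f y * g y|
      = |(f x - f y) * g x + f y * (g x - g y)| := by ring_nf
    _ ≤ |f x - f y| * |g x| + |f y| * |g x - g y| := by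
      simpa only [abs_mul] using abs_add_le ((f x - f y) * g x) (f y * (g x - g y))
    _ ≤ Kf * dist x y * B + A * (Kg * dist x y) := by
      gcongr
      exacts [hf.dist_le_mul x y, hB x, hA y, hg.dist_le_mul x y]
    _ = ↑(Kf * B + A * Kg) * dist x y := by push_cast; ring

lemma lipschitzWith_prod_of_bounded {s : Finset ι} {f : ι → α → ℝ} {A : ι → ℝ≥0} {D : ℝ≥0}
    (hA : ∀ i ∈ s, ∀ x, |f i x| ≤ A i) (hf : ∀ i ∈ s, LipschitzWith (A i * D) (f i)) :
    LipschitzWith (s.card * (∏ i ∈ s, A i) * D) fun x => ∏ i ∈ s, f i x := by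
  induction s using Finset.cons_induction with
  | empty => simp
  | cons i s hi ih =>
    simp only [Finset.forall_mem_cons] at hA hf
    have h_prod (x : α) : |∏ j ∈ s, f j x| ≤ ↑(∏ j ∈ s, A j) := by
      rw [NNReal.coe_prod]
      exact abs_prod_le_prod fun j hj => hA.2 j hj x
    have h_mul := lipschitzWith_mul_of_bounded hf.1 (ih hA.2 hf.2) hA.1 h_prod
    simp only [Finset.prod_cons, Finset.card_cons]
    convert h_mul using 1
    push_cast
    ring

lemma lipschitzWith_prod_comp_iterate [Fintype ι] {T : α → α} {b : ℝ≥0} (hT : LipschitzWith b T)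
    (hb : 1 ≤ b) {K : ℕ} {k : ι → ℕ} (hk : ∀ i, k i ≤ K) {G : ι → α → ℝ} {A : ι → ℝ≥0}
    (hA : ∀ i x, |G i x| ≤ A i) (hG : ∀ i, LipschitzWith (A i) (G i)) :
    LipschitzWith (Fintype.card ι * (∏ i, A i) * b ^ K) fun x => ∏ i, G i (T^[k i] x) :=
  lipschitzWith_prod_of_bounded (fun i _ _ => hA i _) fun i _ =>
    ((hG i).comp (hT.iterate (k i))).weaken <| by gcongr; exact hk i

end LipschitzProducts

lemma bddAbove_range_abs {X : Type*} [TopologicalSpace X] [CompactSpace X] {f : X → ℝ}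
    (hf : Continuous f) : BddAbove (Set.range fun x => |f x|) :=
  (isCompact_range hf.abs).bddAbove

section LipNorm

lemma sInf_lipschitzConstants_nonneg (g : S1 → ℝ) :
    0 ≤ sInf {L : ℝ | 0 ≤ L ∧ LipschitzWith (Real.toNNReal L) g} :=
  Real.sInf_nonneg fun _ hL => hL.1

lemma lipNorm_nonneg (g : S1 → ℝ) : 0 ≤ lipNorm g :=
  add_nonneg (Real.iSup_nonneg fun _ => abs_nonneg _) (sInf_lipschitzConstants_nonneg g)

variable {g : S1 → ℝ}

lemma abs_le_lipNorm (hg : BddAbove (Set.range fun ω => |g ω|)) (x : S1) : |g x| ≤ lipNorm g :=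
  (le_ciSup hg x).trans (le_add_of_nonneg_right (sInf_lipschitzConstants_nonneg g))

lemma lipschitzWith_lipNorm (hg : ∃ K : ℝ≥0, LipschitzWith K g) :
    LipschitzWith (lipNorm g).toNNReal g := by
  obtain ⟨K, hK⟩ := hg
  refine LipschitzWith.of_dist_le_mul fun x y => ?_
  rw [Real.coe_toNNReal _ (lipNorm_nonneg g)]
  obtain h_eq | h_pos := (dist_nonneg (x := x) (y := y)).eq_or_lt
  · simp [dist_eq_zero.mp h_eq.symm]
  rw [← div_le_iff₀ h_pos]
  refine le_add_of_nonneg_of_le (Real.iSup_nonneg fun _ => abs_nonneg _)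
    (le_csInf ⟨K, K.2, by simpa using hK⟩ ?_)
  rintro L ⟨hL_nonneg, hL⟩
  rw [div_le_iff₀ h_pos]
  simpa only [Real.coe_toNNReal L hL_nonneg] using hL.dist_le_mul x y

end LipNorm

lemma lipschitzWith_nsmul {A : Type*} [SeminormedAddCommGroup A] (b : ℕ) :
    LipschitzWith b fun x : A => b • x :=
  LipschitzWith.of_dist_le_mul fun x y => by
    simpa only [dist_eq_norm, ← smul_sub] using! norm_nsmul_le (a := x - y)

theorem stmt18_general {ι κ : Type*} [Fintype ι] [Fintype κ] (b : ℕ) [NeZero b] (N K : ℕ)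
    {k : ι → ℕ} (hk : ∀ i, k i ≤ K) (l : κ → ℕ) {G : ι → S1 → ℝ} {H : κ → S1 → ℝ} {B : κ → ℝ}
    (hG : ∀ i, ∃ L : ℝ≥0, LipschitzWith L (G i)) (hH : ∀ j, Measurable (H j))
    (hB : ∀ j ω, |H j ω| ≤ B j) :
    |Cov (fun ω => ∏ i, G i ((b • ·)^[k i] ω)) (fun ω => ∏ j, H j ((b • ·)^[N + l j] ω))| ≤
      Fintype.card ι / 2 * (∏ i, lipNorm (G i)) * (∏ j, B j) * (b⁻¹ : ℝ) ^ ((N : ℤ) - K) := by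
  have hG_bound (i : ι) (x : S1) : |G i x| ≤ (lipNorm (G i)).toNNReal :=
    (abs_le_lipNorm (bddAbove_range_abs (hG i).choose_spec.continuous) x).trans
      (Real.le_coe_toNNReal _)
  have h_lip := lipschitzWith_prod_comp_iterate (lipschitzWith_nsmul b)
    (Nat.one_le_cast.mpr (NeZero.one_le (n := b))) hk hG_bound fun i => lipschitzWith_lipNorm (hG i)
  have h_meas : Measurable fun ω => ∏ j, H j (b ^ l j • ω) :=
    Finset.measurable_prod _ fun j _ => (hH j).comp (measurable_const_smul _)
  have h_cov := abs_cov_comp_nsmul_le (M := b ^ N) h_lip h_meas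
    fun ω => abs_prod_le_prod fun j _ => hB j _
  simp only [smul_iterate, pow_add, mul_comm (b ^ N), mul_smul] at h_cov ⊢
  refine h_cov.trans_eq ?_
  have hb : (b : ℝ) ≠ 0 := NeZero.ne _
  simp only [NNReal.coe_mul, NNReal.coe_natCast, NNReal.coe_prod, NNReal.coe_pow,
    Real.coe_toNNReal _ (lipNorm_nonneg _), zpow_sub₀ (inv_ne_zero hb), zpow_natCast, inv_pow,
    Nat.cast_pow]
  field_simp

/-- Multiple decorrelation estimate for `F(ω) = 4ω`: for sequences of length `m+1 ≥ 1` and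
`m'+1 ≥ 1` of Lipschitz functions, the covariance of the products decays exponentially in
`N - k_m`. -/
theorem stmt18 (m m' : ℕ) :
    ∃ C : ℝ, 0 < C ∧ ∃ δ : ℝ, δ ∈ Set.Ioo (0:ℝ) 1 ∧
      ∀ N : ℕ, ∀ k : Fin (m + 1) → ℕ, ∀ l : Fin (m' + 1) → ℕ, Monotone k → Monotone l →
      ∀ G : Fin (m + 1) → S1 → ℝ, ∀ H : Fin (m' + 1) → S1 → ℝ,
      (∀ i, ∃ Li : ℝ≥0, LipschitzWith Li (G i)) →
      (∀ j, ∃ Lj : ℝ≥0, LipschitzWith Lj (H j)) →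
      |Cov (fun ω => ∏ i, G i (Fm^[k i] ω)) (fun ω => ∏ j, H j (Fm^[N + l j] ω))| ≤
        C * (∏ i, lipNorm (G i)) * (∏ j, lipNorm (H j)) *
          δ ^ ((N : ℤ) - (k (Fin.last m) : ℤ)) := by
  refine ⟨(m + 1) / 2, by positivity, 4⁻¹, by norm_num, fun N k l hk _ G H hG hH => ?_⟩
  have hH_cont (j : Fin (m' + 1)) : Continuous (H j) := (hH j).choose_spec.continuous
  simpa only [Fintype.card_fin, Nat.cast_add, Nat.cast_one, Nat.cast_ofNat] using!
    stmt18_general 4 N (k (Fin.last m)) (fun i => hk (Fin.le_last i)) l hG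
      (fun j => (hH_cont j).measurable) fun j => abs_le_lipNorm (bddAbove_range_abs (hH_cont j))
end
end
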